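/- arXiv:2305.10501 — 2 statements merged into one kernel-verified Lean document; each statement's English description precedes it below -/
import Mathlib

section
/- Fix integers n ≥ 1, N ≥ n+2 and a real p ≥ 1. The functional G_{n,N} : LC_c(ℝⁿ) → [0,∞), defined by G_{n,N}(f) = min over q ∈ 𝒫_N(f) of (J(f) − J(q)), is continuous with respect to the L^p(ℝⁿ) metric: if f, f_1, f_2, … ∈ LC_c(ℝⁿ) and ‖f_m − f‖_p → 0 as m → ∞, then G_{n,N}(f_m) → G_{n,N}(f). -/
open MeasureTheory Filter Set Metric

noncomputable section

/-- `n`-dimensional Euclidean space `ℝⁿ`. -/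
abbrev Eucl (n : ℕ) : Type := EuclideanSpace ℝ (Fin n)

/-- The epigraph `epi(ψ) = {(x,t) : t ≥ ψ(x)}` of an extended-real-valued function. -/
def epi {n : ℕ} (ψ : Eucl n → EReal) : Set (Eucl n × ℝ) :=
  {q : Eucl n × ℝ | ψ q.1 ≤ (q.2 : EReal)}

/-- `expNeg t = exp (−t)`, extended so that `exp (−(+∞)) = 0`
(the value at `⊥` is irrelevant: functions in `ℝ ∪ {+∞}` never take the value `⊥`). -/
def expNeg (t : EReal) : ℝ :=
  if t = ⊤ ∨ t = ⊥ then 0 else Real.exp (-t.toReal)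

/-- `negLog y = − log y` for `y > 0`, and `+∞` otherwise; for `f = exp(−ψ) ≥ 0`
this recovers `ψ` from `f`. -/
def negLog (y : ℝ) : EReal :=
  if y ≤ 0 then ⊤ else ((-Real.log y : ℝ) : EReal)

/-- Membership in the class `LC_c(ℝⁿ)`: `f = exp(−ψ)` for a convex (as a function into
`ℝ ∪ {+∞}`, encoded by convexity of the epigraph) lower semicontinuous coercive function `ψ`,
`ψ ≢ +∞`, the origin lies in `dom ψ`, and `dom ψ` is not contained in a hyperplane
(its affine span is everything). -/
def MemLCc {n : ℕ} (f : Eucl n → ℝ) : Prop :=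
  ∃ ψ : Eucl n → EReal,
    (∀ x, ψ x ≠ ⊥) ∧
    Convex ℝ (epi ψ) ∧
    LowerSemicontinuous ψ ∧
    Tendsto ψ (cocompact (Eucl n)) (nhds ⊤) ∧
    (∃ x, ψ x ≠ ⊤) ∧
    ψ 0 ≠ ⊤ ∧
    affineSpan ℝ {x : Eucl n | ψ x ≠ ⊤} = ⊤ ∧
    (∀ x, f x = expNeg (ψ x))

/-- The union of the vertical (upward) rays `{(xᵢ,t) : t ≥ tᵢ}`. -/
def verticalRays {n k : ℕ} (x : Fin k → Eucl n) (t : Fin k → ℝ) : Set (Eucl n × ℝ) :=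
  ⋃ i, {q : Eucl n × ℝ | q.1 = x i ∧ t i ≤ q.2}

/-- `p` is the inner linearization of `ψ` built from `k` points `(xᵢ,tᵢ)` of `epi ψ`:
its epigraph is the convex hull of the union of the vertical rays with those endpoints
(so `p = +∞` outside `conv{x₁,…,x_k}`). -/
def IsInnerLinearization {n : ℕ} (ψ : Eucl n → EReal) (k : ℕ) (p : Eucl n → EReal) : Prop :=
  ∃ (x : Fin k → Eucl n) (t : Fin k → ℝ),
    (∀ i, ψ (x i) ≤ ((t i : ℝ) : EReal)) ∧
    epi p = convexHull ℝ (verticalRays x t)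

/-- `𝒫_N(f)`: the set of log affine minorants `exp(−p)` of `f = exp(−ψ)` built from
`k ≤ N` points of `epi ψ` (at most `N` break points). -/
def PN {n : ℕ} (N : ℕ) (f : Eucl n → ℝ) : Set (Eucl n → ℝ) :=
  {q : Eucl n → ℝ | ∃ k : ℕ, 1 ≤ k ∧ k ≤ N ∧ ∃ p : Eucl n → EReal,
    IsInnerLinearization (fun x => negLog (f x)) k p ∧ ∀ x, q x = expNeg (p x)}

/-- The total mass `J(f) = ∫ f`. -/
def totalMass {n : ℕ} (f : Eucl n → ℝ) : ℝ := ∫ x, f x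

/-- `G_{n,N}(f) = min_{p ∈ 𝒫_N(f)} (J(f) − J(p))`. -/
def Gfun {n : ℕ} (N : ℕ) (f : Eucl n → ℝ) : ℝ :=
  sInf {d : ℝ | ∃ q ∈ PN N f, d = totalMass f - totalMass q}

/-- `g` is the symmetric decreasing rearrangement of `f`: for every `t > 0` the superlevel set
`{g ≥ t}` is the closed Euclidean ball centered at the origin (possibly degenerate or empty)
with the same Lebesgue measure as `{f ≥ t}`. -/
def IsSDR {n : ℕ} (f g : Eucl n → ℝ) : Prop :=
  ∀ t : ℝ, 0 < t →
    ({x : Eucl n | t ≤ g x} = ∅ ∨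
      ∃ r : ℝ, 0 ≤ r ∧ {x : Eucl n | t ≤ g x} = closedBall (0 : Eucl n) r) ∧
    volume {x : Eucl n | t ≤ g x} = volume {x : Eucl n | t ≤ f x}

/-!
A function `g` is encoded by the set `{(x, t) | exp (-t) ≤ g x}`, which is convex when `g` is log
concave, and minorants of `g` correspond to subsets.

*Stability.* Superlevel sets are convex, so if `H` is small at one point of a ball then, by
reflection, it is small on half of the ball. Hence if `G i - H i → 0` in measure, contracting the
part of the epigraph of `-log (G i)` below a fixed height towards an interior point, by a factor
`θ < 1`, eventually lands in the epigraph of `-log (H i)`. Under a common integrable majorant the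
part above the fixed height carries little mass, and the contraction costs little mass when `θ` is
close to `1`. Contracting the vertices therefore turns a log affine minorant of `G i` into one of
`H i` with the same number of break points and almost the same mass, provided that the heights of
the vertices are bounded.

*Bounding the heights.* High vertices cannot be discarded, because they influence the hull at low
heights. Instead they are drawn towards the lowest vertex `p` by the projective map
`v ↦ p + (v - p) / (1 + (v.2 - p.2) / R)`: being projective, it maps the hull of the vertices onto
the hull of their images. These images lie at most `R` above `p`, and for large `R` their hull
contains the contraction towards `p`, by a factor close to `1`, of the low part of the old hull.
-/

/-! ### Log epigraphs -/

section LogEpi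

variable {E : Type*}

/-- The epigraph of `-log g`, the set in which all convexity arguments of this file take place.
It is written without logarithms, so that zeros of `g` need no special treatment. -/
def logEpi (g : E → ℝ) : Set (E × ℝ) :=
  {v | Real.exp (-v.2) ≤ g v.1}

/-- Sets that contain, with any point, the vertical upward ray issuing from it; among the sets with
closed vertical slices bounded below these are the epigraphs. -/
def IsUpwardClosed (C : Set (E × ℝ)) : Prop :=
  ∀ ⦃x : E⦄ ⦃s t : ℝ⦄, s ≤ t → (x, s) ∈ C → (x, t) ∈ C

theorem mem_logEpi {g : E → ℝ} {v : E × ℝ} : v ∈ logEpi g ↔ Real.exp (-v.2) ≤ g v.1 :=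
  Iff.rfl

theorem isUpwardClosed_logEpi (g : E → ℝ) : IsUpwardClosed (logEpi g) := fun _ _ _ hst hs =>
  (Real.exp_le_exp.2 (neg_le_neg hst)).trans hs

theorem IsUpwardClosed.lineMap_mem [AddCommGroup E] [Module ℝ E] {C : Set (E × ℝ)}
    (hC : IsUpwardClosed C) (p : E × ℝ) {θ : ℝ} (hθ : 0 ≤ θ) {x : E} {s t : ℝ} (hst : s ≤ t)
    (hs : AffineMap.lineMap p (x, s) θ ∈ C) : AffineMap.lineMap p (x, t) θ ∈ C :=
  hC (x := AffineMap.lineMap p.1 x θ) (lineMap_mono_right (a := p.2) hst hθ) hs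

theorem neg_log_mem_logEpi {g : E → ℝ} {x : E} (hx : 0 < g x) :
    (x, -Real.log (g x)) ∈ logEpi g := by
  rw [mem_logEpi, neg_neg, Real.exp_log hx]

theorem le_of_logEpi_subset {g h : E → ℝ} (hh : 0 ≤ h) (hgh : logEpi g ⊆ logEpi h) : g ≤ h := by
  intro x
  rcases le_or_gt (g x) 0 with hx | hx
  · exact hx.trans (hh x)
  · simpa only [mem_logEpi, neg_neg, Real.exp_log hx] using hgh (neg_log_mem_logEpi hx)

theorem eq_of_logEpi_eq {g h : E → ℝ} (hg : 0 ≤ g) (hh : 0 ≤ h) (hgh : logEpi g = logEpi h) :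
    g = h :=
  le_antisymm (le_of_logEpi_subset hh hgh.subset) (le_of_logEpi_subset hg hgh.superset)

theorem le_exp_of_forall_mem_logEpi {g : E → ℝ} {x : E} {K : ℝ}
    (h : ∀ t, (x, t) ∈ logEpi g → -K ≤ t) : g x ≤ Real.exp K := by
  rcases le_or_gt (g x) 0 with hx | hx
  · exact hx.trans (Real.exp_pos K).le
  · rw [← Real.log_le_iff_le_exp hx]
    exact neg_le_neg_iff.1 (h _ (neg_log_mem_logEpi hx))

theorem neg_le_snd_of_mem_logEpi {g : E → ℝ} {K : ℝ} (hg : ∀ x, g x ≤ Real.exp K) {v : E × ℝ}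
    (hv : v ∈ logEpi g) : -K ≤ v.2 :=
  neg_le.1 (Real.exp_le_exp.1 (hv.trans (hg v.1)))

/-- The function whose log epigraph is a given closed upward closed set `C` with heights bounded
below; it vanishes off the projection of `C`, where the supremum is over the empty set. -/
def ofLogEpi (C : Set (E × ℝ)) (x : E) : ℝ :=
  sSup ((fun s : ℝ => Real.exp (-s)) '' {s | (x, s) ∈ C})

theorem ofLogEpi_nonneg (C : Set (E × ℝ)) : 0 ≤ ofLogEpi C := fun _ =>
  Real.sSup_nonneg (forall_mem_image.2 fun _ _ => (Real.exp_pos _).le)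

theorem logEpi_ofLogEpi [TopologicalSpace E] {C : Set (E × ℝ)} (hC : IsClosed C)
    (hup : IsUpwardClosed C) {b : ℝ} (hb : ∀ v ∈ C, b ≤ v.2) : logEpi (ofLogEpi C) = C := by
  ext ⟨x, s⟩
  have hbdd : BddAbove ((fun s : ℝ => Real.exp (-s)) '' {s | (x, s) ∈ C}) :=
    ⟨Real.exp (-b), forall_mem_image.2 fun s hs => Real.exp_le_exp.2 (neg_le_neg (hb _ hs))⟩
  refine ⟨fun h => ?_, fun h => le_csSup hbdd (mem_image_of_mem _ h)⟩
  have hne : {s | (x, s) ∈ C}.Nonempty := by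
    by_contra! hempty
    refine (Real.exp_pos (-s)).not_ge (h.trans_eq ?_)
    simp only [ofLogEpi, hempty, image_empty, Real.sSup_empty]
  have hmem : (x, sInf {s | (x, s) ∈ C}) ∈ C :=
    (hC.preimage (Continuous.prodMk_right x)).csInf_mem hne ⟨b, fun s hs => hb _ hs⟩
  refine hup (Real.exp_le_exp.1 (h.trans (csSup_le (hne.image _) ?_)) |> neg_le_neg_iff.1) hmem
  exact forall_mem_image.2 fun t ht =>
    Real.exp_le_exp.2 (neg_le_neg (csInf_le ⟨b, fun s hs => hb _ hs⟩ ht))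

end LogEpi

section LogConcave

/-- Log concave functions `g = exp (-ψ)` with `ψ` convex and `ℝ ∪ {+∞}`-valued. -/
structure IsLogConcave {E : Type*} [AddCommGroup E] [Module ℝ E] (g : E → ℝ) : Prop where
  nonneg : 0 ≤ g
  convex_logEpi : Convex ℝ (logEpi g)

namespace IsLogConcave

section Module

variable {E : Type*} [AddCommGroup E] [Module ℝ E] {g : E → ℝ}

theorem lineMap_mem_logEpi (hg : IsLogConcave g) {v w : E × ℝ} (hv : v ∈ logEpi g)
    (hw : w ∈ logEpi g) {θ : ℝ} (hθ : θ ∈ Icc 0 1) : AffineMap.lineMap v w θ ∈ logEpi g :=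
  hg.convex_logEpi.lineMap_mem hv hw hθ

theorem quasiconcaveOn (hg : IsLogConcave g) : QuasiconcaveOn ℝ univ g := by
  intro a
  rcases le_or_gt a 0 with ha | ha
  · convert convex_univ (𝕜 := ℝ) (E := E)
    exact eq_univ_of_forall fun x => ⟨mem_univ x, ha.trans (hg.nonneg x)⟩
  · have hline : Convex ℝ {x | (x, -Real.log a) ∈ logEpi g} :=
      hg.convex_logEpi.affine_preimage
        ((AffineMap.id ℝ E).prod (AffineMap.const ℝ E (-Real.log a)))
    simpa only [mem_logEpi, neg_neg, Real.exp_log ha, mem_univ, true_and] using hline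

end Module

variable {E : Type*} [NormedAddCommGroup E] [NormedSpace ℝ E] {g : E → ℝ}

theorem exp_le_of_mem_ball_lineMap (hg : IsLogConcave g) {z : E} {r c : ℝ}
    (hball : ∀ w ∈ ball z r, Real.exp (-c) ≤ g w) {v : E × ℝ} (hv : v ∈ logEpi g) {θ : ℝ}
    (hθ : θ ∈ Ico 0 1) {w : E} (hw : w ∈ ball (AffineMap.lineMap z v.1 θ) ((1 - θ) * r)) :
    Real.exp (-AffineMap.lineMap c v.2 θ) ≤ g w := by
  have hθ' : 0 < 1 - θ := sub_pos.2 hθ.2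
  set y : E := z + (1 - θ)⁻¹ • (w - AffineMap.lineMap z v.1 θ) with hy
  have hyball : y ∈ ball z r := by
    rw [mem_ball, dist_eq_norm] at hw ⊢
    rwa [hy, add_sub_cancel_left, norm_smul, Real.norm_of_nonneg (inv_pos.2 hθ').le,
      inv_mul_lt_iff₀ hθ']
  have hfst : AffineMap.lineMap y v.1 θ = w := by
    rw [AffineMap.lineMap_apply_module, hy, smul_add, smul_inv_smul₀ hθ'.ne',
      AffineMap.lineMap_apply_module]
    abel
  have hmem := hg.lineMap_mem_logEpi (v := (y, c)) (hball y hyball) hv ⟨hθ.1, hθ.2.le⟩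
  rwa [mem_logEpi, AffineMap.fst_lineMap, AffineMap.snd_lineMap, hfst] at hmem

variable [FiniteDimensional ℝ E] [MeasurableSpace E] [BorelSpace E]
  (μ : Measure E) [μ.IsAddHaarMeasure]

theorem aemeasurable (hg : IsLogConcave g) : AEMeasurable g μ := by
  refine NullMeasurable.aemeasurable (measurable_of_Ici fun a => ?_)
  have hsuper := (hg.quasiconcaveOn a).nullMeasurableSet μ
  simp only [mem_univ, true_and] at hsuper
  exact hsuper

variable {μ} in
theorem integrable_of_le (hg : IsLogConcave g) {D : E → ℝ} (hD : Integrable D μ) (hgD : g ≤ D) :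
    Integrable g μ :=
  hD.mono' (hg.aemeasurable μ).aestronglyMeasurable <| .of_forall fun x =>
    (Real.norm_of_nonneg (hg.nonneg x)).trans_le (hgD x)

end IsLogConcave

end LogConcave

/-! ### Contraction towards an interior point -/

theorem tendstoInMeasure_sub_zero_iff {α ι G : Type*} [MeasurableSpace α] {μ : Measure α}
    [SeminormedAddCommGroup G] {l : Filter ι} {F : ι → α → G} {f : α → G} :
    TendstoInMeasure μ (fun i => F i - f) l 0 ↔ TendstoInMeasure μ F l f := by
  simp [tendstoInMeasure_iff_norm]

theorem tendstoInMeasure_sub_zero_comm {α ι G : Type*} [MeasurableSpace α] {μ : Measure α}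
    [SeminormedAddCommGroup G] {l : Filter ι} {F H : ι → α → G} :
    TendstoInMeasure μ (fun i => F i - H i) l 0 ↔ TendstoInMeasure μ (fun i => H i - F i) l 0 := by
  simp [tendstoInMeasure_iff_norm, norm_sub_rev (F _ _)]

section Contraction

variable {E : Type*} [NormedAddCommGroup E] [NormedSpace ℝ E] [MeasurableSpace E] [BorelSpace E]
  {μ : Measure E}

-- One of two points symmetric about `y` lies in the sublevel set, and reflections preserve `μ`.
theorem measure_ball_le_two_mul_measure_lt [FiniteDimensional ℝ E] [μ.IsAddHaarMeasure]
    {h : E → ℝ} (hh : QuasiconcaveOn ℝ univ h) {y : E} {a : ℝ} (hy : h y < a) (ρ : ℝ) :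
    μ (ball y ρ) ≤ 2 * μ {w ∈ ball y ρ | h w < a} := by
  set A := {w ∈ ball y ρ | h w < a}
  let σ : E ≃ᵐ E := MeasurableEquiv.subLeft (y + y)
  have hσ : ∀ w, σ w = y + y - w := fun _ => rfl
  have hcover : ball y ρ ⊆ A ∪ σ ⁻¹' A := by
    intro w hw
    by_contra hcon
    have hσw : σ w ∈ ball y ρ := by
      rwa [mem_ball, dist_eq_norm, hσ, add_sub_assoc, add_sub_cancel_left, norm_sub_rev,
        ← dist_eq_norm]
    have hw_ge : a ≤ h w := not_lt.1 fun h' => hcon (Or.inl ⟨hw, h'⟩)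
    have hσw_ge : a ≤ h (σ w) := not_lt.1 fun h' => hcon (Or.inr ⟨hσw, h'⟩)
    have hmid : midpoint ℝ w (σ w) = y := by
      rw [midpoint_eq_iff, AffineEquiv.pointReflection_apply, vsub_eq_sub, vadd_eq_add, hσ,
        sub_add_eq_add_sub]
    have := (hh a).midpoint_mem ⟨mem_univ _, hw_ge⟩ ⟨mem_univ _, hσw_ge⟩
    rw [hmid] at this
    exact this.2.not_gt hy
  have hpreserve : μ (σ ⁻¹' A) = μ A :=
    (μ.measurePreserving_sub_left (y + y)).measure_preimage_emb σ.measurableEmbedding A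
  calc μ (ball y ρ) ≤ μ A + μ (σ ⁻¹' A) := (measure_mono hcover).trans (measure_union_le _ _)
    _ = 2 * μ A := by rw [hpreserve, two_mul]

variable {ι : Type*} {l : Filter ι} {G H : ι → E → ℝ}

theorem eventually_sub_le_of_forall_mem_ball [FiniteDimensional ℝ E] [μ.IsAddHaarMeasure]
    (hH : ∀ᶠ i in l, QuasiconcaveOn ℝ univ (H i))
    (hGH : TendstoInMeasure μ (fun i => G i - H i) l 0) {η ρ : ℝ} (hη : 0 < η) (hρ : 0 < ρ) :
    ∀ᶠ i in l, ∀ y a, (∀ w ∈ ball y ρ, a ≤ G i w) → a - η ≤ H i y := by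
  have hlim : Tendsto (fun i => 2 * μ {x | η ≤ ‖(G i - H i) x‖}) l (nhds 0) := by
    simpa using ENNReal.Tendsto.const_mul (a := 2) (tendstoInMeasure_iff_norm.1 hGH η hη)
      (Or.inr (by simp))
  filter_upwards [hH, hlim.eventually (gt_mem_nhds (measure_ball_pos μ (0 : E) hρ))]
    with i hHi hsmall y a hball
  by_contra! hy
  refine hsmall.not_ge ?_
  rw [← Measure.addHaar_ball_center μ y ρ]
  refine (measure_ball_le_two_mul_measure_lt hHi hy ρ).trans ?_
  gcongr with w
  rintro ⟨hw, hlt⟩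
  exact le_trans (by simp only [Pi.sub_apply]; linarith [hball w hw]) (le_abs_self _)

variable [FiniteDimensional ℝ E] [μ.IsAddHaarMeasure]

theorem eventually_lineMap_mem_logEpi {z : E} {r c : ℝ} (hr : 0 < r)
    (hG : ∀ᶠ i in l, IsLogConcave (G i))
    (hball : ∀ᶠ i in l, ∀ w ∈ ball z r, Real.exp (-c) ≤ G i w)
    (hH : ∀ᶠ i in l, IsLogConcave (H i)) (hGH : TendstoInMeasure μ (fun i => G i - H i) l 0)
    {θ : ℝ} (hθ : θ ∈ Ico 0 1) (U : ℝ) :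
    ∀ᶠ i in l, ∀ v ∈ logEpi (G i), v.2 ≤ U →
      AffineMap.lineMap (z, c + 1) v θ ∈ logEpi (H i) := by
  have hθ' : 0 < 1 - θ := sub_pos.2 hθ.2
  have hgap : 0 < 1 - Real.exp (-(1 - θ)) := sub_pos.2 (Real.exp_lt_one_iff.2 (neg_lt_zero.2 hθ'))
  filter_upwards [hG, hball, eventually_sub_le_of_forall_mem_ball
    (hH.mono fun i hi => hi.quasiconcaveOn) hGH
    (η := Real.exp (-AffineMap.lineMap c U θ) * (1 - Real.exp (-(1 - θ)))) (by positivity)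
    (mul_pos hθ' hr)] with i hGi hi hclose v hv hvU
  have hdrop := hclose _ _ fun w hw => hGi.exp_le_of_mem_ball_lineMap hi hv hθ hw
  rw [mem_logEpi, AffineMap.fst_lineMap, AffineMap.snd_lineMap]
  refine le_trans ?_ hdrop
  have hheight : AffineMap.lineMap (c + 1) v.2 θ = AffineMap.lineMap c v.2 θ + (1 - θ) := by
    simp only [AffineMap.lineMap_apply_ring']; ring
  have hmono : Real.exp (-AffineMap.lineMap c U θ) ≤ Real.exp (-AffineMap.lineMap c v.2 θ) := by
    rw [Real.exp_le_exp, neg_le_neg_iff, AffineMap.lineMap_apply_ring',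
      AffineMap.lineMap_apply_ring']
    linarith [mul_le_mul_of_nonneg_left hvU hθ.1]
  rw [hheight, neg_add, Real.exp_add]
  linarith [mul_le_mul_of_nonneg_right hmono hgap.le]

end Contraction

/-! ### Uniform domination -/

section Domination

theorem exists_forall_lt_of_tendsto_cocompact {E : Type*} [SeminormedAddCommGroup E] [ProperSpace E]
    {g : E → ℝ} (hg : Tendsto g (cocompact E) (nhds 0)) (z : E) {a : ℝ} (ha : 0 < a) :
    ∃ R > 0, ∀ x, R ≤ ‖x - z‖ → g x < a := by
  have hev := hg.eventually (gt_mem_nhds ha)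
  rw [← Metric.cobounded_eq_cocompact, (hasBasis_cobounded_compl_ball z).eventually_iff] at hev
  obtain ⟨R, -, hR⟩ := hev
  exact ⟨max R 1, by positivity, fun x hx =>
    hR (by simpa [dist_eq_norm] using (le_max_left R 1).trans hx)⟩

variable {E : Type*} [NormedAddCommGroup E] [NormedSpace ℝ E]

-- Reflecting `x` through `z` and shrinking lands in the ball, so `g x` cannot be large.
theorem IsLogConcave.exists_forall_le_exp_of_norm_le {g : E → ℝ} (hg : IsLogConcave g) {z : E}
    {r c : ℝ} (hr : 0 < r) (hball : ∀ w ∈ ball z r, Real.exp (-c) ≤ g w) {R : ℝ} (hR : 0 < R) :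
    ∃ K, ∀ x, ‖x - z‖ ≤ R → g x ≤ Real.exp K := by
  set a := r / (2 * R)
  have ha : 0 < a := by positivity
  have hgz : 0 < g z := (Real.exp_pos _).trans_le (hball z (mem_ball_self hr))
  refine ⟨((1 + a) * Real.log (g z) + c) / a, fun x hx =>
    le_exp_of_forall_mem_logEpi fun t ht => ?_⟩
  have hrefl : z - a • (x - z) ∈ ball z r := by
    rw [mem_ball, dist_eq_norm, sub_sub_cancel_left, norm_neg, norm_smul, Real.norm_of_nonneg ha.le]
    calc a * ‖x - z‖ ≤ a * R := by gcongr
      _ = r / 2 := by simp only [a]; field_simp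
      _ < r := half_lt_self hr
  have hfst : AffineMap.lineMap (z - a • (x - z)) x (a / (1 + a)) = z := by
    rw [AffineMap.lineMap_apply_module']
    match_scalars <;> field_simp <;> ring
  have hmem := hg.lineMap_mem_logEpi (v := (z - a • (x - z), c)) (hball _ hrefl) ht
    (θ := a / (1 + a)) ⟨by positivity, (div_le_one (by positivity)).2 (by linarith)⟩
  rw [mem_logEpi, AffineMap.fst_lineMap, AffineMap.snd_lineMap, hfst,
    ← Real.le_log_iff_exp_le hgz, AffineMap.lineMap_apply_ring'] at hmem
  have hscaled : -(a * t + c) ≤ (1 + a) * Real.log (g z) := by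
    calc -(a * t + c) = (1 + a) * -(a / (1 + a) * (t - c) + c) := by field_simp; ring
      _ ≤ (1 + a) * Real.log (g z) := by gcongr
  rw [neg_le, le_div_iff₀ ha]
  linarith

-- Finitely many points of the support already span, and `g` is bounded below on their hull.
theorem IsLogConcave.exists_forall_mem_ball_exp_le [FiniteDimensional ℝ E] {g : E → ℝ}
    (hg : IsLogConcave g) (hspan : affineSpan ℝ (Function.support g) = ⊤) :
    ∃ z, ∃ r > 0, ∃ c, ∀ w ∈ ball z r, Real.exp (-c) ≤ g w := by
  obtain ⟨t, hts, htspan, hind⟩ := exists_affineIndependent ℝ E (Function.support g)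
  have hfin : t.Finite := finite_set_of_fin_dim_affineIndependent ℝ hind
  obtain ⟨c, hc⟩ := (hfin.image fun x => -Real.log (g x)).bddAbove
  have hle : ∀ x ∈ t, Real.exp (-c) ≤ g x := fun x hx => by
    have hgx : 0 < g x := (hg.nonneg x).lt_of_ne' (hts hx)
    rw [← Real.le_log_iff_exp_le hgx, neg_le]
    exact hc (mem_image_of_mem _ hx)
  have hint : (interior {x ∈ univ | Real.exp (-c) ≤ g x}).Nonempty := by
    rw [(hg.quasiconcaveOn _).interior_nonempty_iff_affineSpan_eq_top, ← top_le_iff, ← hspan,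
      ← htspan]
    exact affineSpan_mono ℝ fun x hx => ⟨mem_univ x, hle x hx⟩
  obtain ⟨z, hz⟩ := hint
  obtain ⟨r, hr, hsub⟩ := Metric.isOpen_iff.1 isOpen_interior z hz
  exact ⟨z, r, hr, c, fun w hw => (interior_subset (hsub hw)).2⟩

theorem IsLogConcave.le_exp_sub_norm {g : E → ℝ} (hg : IsLogConcave g) {z : E} {c R K B : ℝ}
    (hz : Real.exp (-c) ≤ g z) (hK : ∀ x, g x ≤ Real.exp K) (hR : 0 < R)
    (hdecay : ∀ x, ‖x - z‖ = R → g x < Real.exp (-(c + 1))) (hKB : K + 1 ≤ B) (hcB : -c ≤ B)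
    (x : E) : g x ≤ Real.exp (B - ‖x - z‖ / R) := by
  rcases le_total ‖x - z‖ R with hx | hx
  · refine (hK x).trans (Real.exp_le_exp.2 ?_)
    linarith [(div_le_one hR).2 hx]
  refine le_exp_of_forall_mem_logEpi fun s hs => ?_
  have hpos : 0 < ‖x - z‖ := hR.trans_le hx
  have hθ : R / ‖x - z‖ ∈ Icc 0 1 := ⟨by positivity, (div_le_one hpos).2 hx⟩
  have hmem := hg.lineMap_mem_logEpi (v := (z, c)) hz hs hθ
  have hnorm : ‖AffineMap.lineMap z x (R / ‖x - z‖) - z‖ = R := by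
    rw [← dist_eq_norm, dist_lineMap_left, dist_comm, dist_eq_norm, Real.norm_of_nonneg hθ.1,
      div_mul_cancel₀ _ hpos.ne']
  rw [mem_logEpi, AffineMap.fst_lineMap, AffineMap.snd_lineMap] at hmem
  have hlow := Real.exp_lt_exp.1 (hmem.trans_lt (hdecay _ hnorm))
  rw [AffineMap.lineMap_apply_ring'] at hlow
  have hslope : ‖x - z‖ / R < s - c := by
    rw [← one_div_div, div_lt_iff₀' (by positivity)]
    linarith
  linarith

variable [FiniteDimensional ℝ E] [MeasurableSpace E] [BorelSpace E]

theorem integrable_exp_sub_norm (μ : Measure E) [μ.IsAddHaarMeasure] (z : E) (B : ℝ) {R : ℝ}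
    (hR : 0 < R) : Integrable (fun x => Real.exp (B - ‖x - z‖ / R)) μ := by
  set d := Module.finrank ℝ E
  have hpoly : Integrable (fun x : E => (1 + ‖x‖) ^ (-((d + 1 : ℕ) : ℝ))) μ :=
    integrable_one_add_norm (by simp [d])
  have hexp : Integrable (fun x : E => Real.exp (-‖x‖)) μ := by
    refine (hpoly.const_mul (Real.exp 1 * (d + 1).factorial)).mono'
      (Continuous.aestronglyMeasurable (by fun_prop)) (.of_forall fun x => ?_)
    have hpow := Real.pow_div_factorial_le_exp (x := 1 + ‖x‖) (by positivity) (d + 1)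
    rw [div_le_iff₀ (by positivity), Real.exp_add] at hpow
    rw [Real.norm_of_nonneg (Real.exp_pos _).le, Real.rpow_neg (by positivity),
      Real.rpow_natCast, Real.exp_neg, ← div_eq_mul_inv, le_div_iff₀ (by positivity),
      inv_mul_le_iff₀ (Real.exp_pos _)]
    linarith
  refine (((hexp.comp_smul (inv_ne_zero hR.ne')).comp_sub_right z).const_mul
    (Real.exp B)).congr (.of_forall fun x => ?_)
  simp only [norm_smul, norm_inv, Real.norm_of_nonneg hR.le, ← Real.exp_add, div_eq_inv_mul,
    sub_eq_add_neg]

/-- An integrable bounded majorant, the common bound for the functions of a family. -/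
structure IsEnvelope (μ : Measure E) (D : E → ℝ) (B : ℝ) : Prop where
  integrable : Integrable D μ
  nonneg : 0 ≤ D
  le_exp : ∀ x, D x ≤ Real.exp B

theorem isEnvelope_exp_sub_norm (μ : Measure E) [μ.IsAddHaarMeasure] (z : E) (B : ℝ) {R : ℝ}
    (hR : 0 < R) : IsEnvelope μ (fun x => Real.exp (B - ‖x - z‖ / R)) B where
  integrable := integrable_exp_sub_norm μ z B hR
  nonneg _ := (Real.exp_pos _).le
  le_exp _ := Real.exp_le_exp.2 (sub_le_self _ (by positivity))

/-- Log concave functions that are bounded below on one ball and above by one envelope; the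
estimates of this file are uniform over all functions with the same data `z`, `r`, `c`, `D`. -/
structure IsDominated (z : E) (r c : ℝ) (D g : E → ℝ) : Prop extends IsLogConcave g where
  exp_le_of_mem_ball : ∀ w ∈ ball z r, Real.exp (-c) ≤ g w
  le_dom : g ≤ D

variable {μ : Measure E} [μ.IsAddHaarMeasure]

-- A point of `epi (-log (F i))` that is too low or too far from `z` is halfway contracted towards
-- `z` to a point which `epi (-log f)` cannot contain.
theorem eventually_isDominated {f : E → ℝ} {z : E} {r c R K : ℝ} (hf : IsLogConcave f)
    (hr : 0 < r) (hball : ∀ w ∈ ball z r, Real.exp (-c) ≤ f w) (hK : ∀ x, f x ≤ Real.exp K)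
    (hR : 0 < R) (hdecay : ∀ x, R ≤ ‖x - z‖ → f x < Real.exp (-(c + 2)))
    {ι : Type*} {l : Filter ι} {F : ι → E → ℝ} (hF : ∀ i, IsLogConcave (F i))
    (hconv : TendstoInMeasure μ F l f) :
    ∀ᶠ i in l, IsDominated z (r / 2) (c + 1)
      (fun x => Real.exp (2 * K + c + 3 - ‖x - z‖ / (2 * R))) (F i) := by
  have hballF : ∀ᶠ i in l, ∀ w ∈ ball z (r / 2), Real.exp (-(c + 1)) ≤ F i w := by
    filter_upwards [eventually_sub_le_of_forall_mem_ball
      (.of_forall fun i => (hF i).quasiconcaveOn)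
      (tendstoInMeasure_sub_zero_comm.1 (tendstoInMeasure_sub_zero_iff.2 hconv))
      (η := Real.exp (-c) - Real.exp (-(c + 1))) (by simp) (half_pos hr)] with i hi w hw
    rw [← sub_sub_cancel (Real.exp (-c)) (Real.exp (-(c + 1)))]
    refine hi w _ fun y hy => hball y ?_
    rw [mem_ball] at hy hw ⊢
    linarith [dist_triangle y w z]
  have hcK : -c ≤ K := Real.exp_le_exp.1 ((hball z (mem_ball_self hr)).trans (hK z))
  filter_upwards [hballF, eventually_lineMap_mem_logEpi (half_pos hr) (.of_forall hF) hballF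
    (.of_forall fun _ => hf) (tendstoInMeasure_sub_zero_iff.2 hconv) (θ := 1 / 2) (by norm_num)
    (c + 2)] with i hi hhalf
  have hzi := hi z (mem_ball_self (half_pos hr))
  have hmid : ∀ x t, t ≤ c + 2 → (x, t) ∈ logEpi (F i) →
      Real.exp (-((c + 2 + t) / 2)) ≤ f (AffineMap.lineMap z x (1 / 2 : ℝ)) := by
    intro x t ht hxt
    have hmem := hhalf _ hxt ht
    rw [mem_logEpi, AffineMap.fst_lineMap, AffineMap.snd_lineMap, AffineMap.lineMap_apply_ring']
      at hmem
    convert hmem using 3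
    ring
  have hbound : ∀ x, F i x ≤ Real.exp (2 * K + c + 2) := fun x =>
    le_exp_of_forall_mem_logEpi fun t ht => by
      rcases le_total t (c + 2) with htc | htc
      · linarith [Real.exp_le_exp.1 ((hmid x t htc ht).trans (hK _))]
      · linarith
  have hdecayF : ∀ x, ‖x - z‖ = 2 * R → F i x < Real.exp (-(c + 1 + 1)) := by
    intro x hx
    by_contra! hcon
    refine (hdecay (AffineMap.lineMap z x (1 / 2 : ℝ)) ?_).not_ge ?_
    · rw [← dist_eq_norm, dist_lineMap_left, dist_comm, dist_eq_norm, hx]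
      norm_num
      linarith
    · rw [add_assoc, one_add_one_eq_two] at hcon
      simpa only [add_self_div_two] using hmid x (c + 2) le_rfl hcon
  exact ⟨hF i, hi, (hF i).le_exp_sub_norm hzi hbound (by positivity) hdecayF (by linarith)
    (by linarith)⟩

theorem exists_isDominated {f : E → ℝ} (hf : IsLogConcave f)
    (hf0 : Tendsto f (cocompact E) (nhds 0)) (hspan : affineSpan ℝ (Function.support f) = ⊤)
    {ι : Type*} {l : Filter ι} {F : ι → E → ℝ} (hF : ∀ i, IsLogConcave (F i))
    (hconv : TendstoInMeasure μ F l f) :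
    ∃ z, ∃ r > 0, ∃ c D B, IsEnvelope μ D B ∧ IsDominated z r c D f ∧
      ∀ᶠ i in l, IsDominated z r c D (F i) := by
  obtain ⟨z, r, hr, c, hball⟩ := hf.exists_forall_mem_ball_exp_le hspan
  obtain ⟨R, hR, hdecay⟩ := exists_forall_lt_of_tendsto_cocompact hf0 z (Real.exp_pos (-(c + 2)))
  obtain ⟨K, hK⟩ := hf.exists_forall_le_exp_of_norm_le hr hball hR
  have hbound : ∀ x, f x ≤ Real.exp (max K (-(c + 2))) := fun x => by
    rcases le_total ‖x - z‖ R with hx | hx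
    · exact (hK x hx).trans (Real.exp_le_exp.2 (le_max_left _ _))
    · exact (hdecay x hx).le.trans (Real.exp_le_exp.2 (le_max_right _ _))
  refine ⟨z, r / 2, half_pos hr, c + 1, _, _, isEnvelope_exp_sub_norm μ z _ (by positivity), ?_,
    eventually_isDominated hf hr hball hbound hR hdecay hF hconv⟩
  exact eventually_pure.1 <| eventually_isDominated (μ := μ) (l := pure ())
    (F := fun _ : Unit => f) hf hr hball hbound hR hdecay (fun _ => hf)
    fun ε hε => by simp [hε.not_ge]

end Domination

/-! ### Mass under contractions of log epigraphs -/

section Mass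

theorem integrable_min_const {α : Type*} [MeasurableSpace α] {μ : Measure α} {q : α → ℝ}
    (hq : Integrable q μ) {a : ℝ} (ha : 0 ≤ a) :
    Integrable (fun x => min (q x) a) μ :=
  hq.mono (hq.aestronglyMeasurable.inf aestronglyMeasurable_const) <| .of_forall fun x => by
    rw [Real.norm_eq_abs, Real.norm_eq_abs, abs_le]
    exact ⟨le_min (neg_abs_le _) (by linarith [abs_nonneg (q x)]),
      (min_le_left _ _).trans (le_abs_self _)⟩

theorem tendsto_integral_min_exp_neg {α : Type*} [MeasurableSpace α] {μ : Measure α}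
    {D : α → ℝ} (hD : Integrable D μ) (hD0 : 0 ≤ D) :
    Tendsto (fun T : ℝ => ∫ x, min (D x) (Real.exp (-T)) ∂μ) atTop (nhds 0) := by
  rw [← integral_zero α ℝ (μ := μ)]
  refine tendsto_integral_filter_of_dominated_convergence D
    (.of_forall fun T => (integrable_min_const hD (Real.exp_pos _).le).aestronglyMeasurable)
    (.of_forall fun T => .of_forall fun x => ?_) hD (.of_forall fun x => ?_)
  · rw [Real.norm_of_nonneg (le_min (hD0 x) (Real.exp_pos _).le)]
    exact min_le_left _ _
  · have hmin : min (D x) 0 = 0 := min_eq_right (hD0 x)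
    simpa only [hmin] using
      (tendsto_const_nhds (x := D x)).min Real.tendsto_exp_neg_atTop_nhds_zero

variable {E : Type*} [NormedAddCommGroup E] [NormedSpace ℝ E] [FiniteDimensional ℝ E]
  [MeasurableSpace E] [BorelSpace E]

theorem integral_comp_lineMap {G : Type*} [NormedAddCommGroup G] [NormedSpace ℝ G] (μ : Measure E)
    [μ.IsAddHaarMeasure] (g : E → G) (p : E) (θ : ℝ) :
    ∫ x, g (AffineMap.lineMap p x θ) ∂μ = |(θ ^ Module.finrank ℝ E)⁻¹| • ∫ x, g x ∂μ := by
  simp only [AffineMap.lineMap_apply_module]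
  rw [μ.integral_comp_smul (fun x => g ((1 - θ) • p + x)), integral_add_left_eq_self]

variable {μ : Measure E} [μ.IsAddHaarMeasure]

theorem mul_integral_sub_min_le_of_lineMap_mem_logEpi {q q' : E → ℝ} {B T θ : ℝ} {p : E × ℝ}
    (hq : Integrable q μ) (hqB : ∀ x, q x ≤ Real.exp B) (hq' : Integrable q' μ) (hq'0 : 0 ≤ q')
    (hθ : θ ∈ Ioc 0 1)
    (h : ∀ v ∈ logEpi q, v.2 ≤ T → AffineMap.lineMap p v θ ∈ logEpi q') :
    θ ^ Module.finrank ℝ E * Real.exp (-((1 - θ) * (B + p.2))) *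
      ∫ x, (q x - min (q x) (Real.exp (-T))) ∂μ ≤ ∫ x, q' x ∂μ := by
  have hpoint : ∀ x, Real.exp (-((1 - θ) * (B + p.2))) * (q x - min (q x) (Real.exp (-T))) ≤
      q' (AffineMap.lineMap p.1 x θ) := by
    intro x
    rcases le_or_gt (q x) (Real.exp (-T)) with hx | hx
    · rw [min_eq_left hx, sub_self, mul_zero]
      exact hq'0 _
    have hpos : 0 < q x := (Real.exp_pos _).trans hx
    have hT : -Real.log (q x) ≤ T := by linarith [(Real.lt_log_iff_exp_lt hpos).2 hx]
    have hB : Real.log (q x) ≤ B := (Real.log_le_iff_le_exp hpos).2 (hqB x)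
    have hmem := h _ (neg_log_mem_logEpi hpos) hT
    rw [mem_logEpi, AffineMap.fst_lineMap, AffineMap.snd_lineMap,
      AffineMap.lineMap_apply_ring'] at hmem
    calc Real.exp (-((1 - θ) * (B + p.2))) * (q x - min (q x) (Real.exp (-T)))
        ≤ Real.exp (-((1 - θ) * (B + p.2))) * Real.exp (Real.log (q x)) := by
          rw [Real.exp_log hpos]
          gcongr
          exact sub_le_self _ (le_min hpos.le (Real.exp_pos _).le)
      _ ≤ Real.exp (-(θ * (-Real.log (q x) - p.2) + p.2)) := by
          rw [← Real.exp_add, Real.exp_le_exp]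
          linarith [mul_le_mul_of_nonneg_left hB (sub_nonneg.2 hθ.2)]
      _ ≤ _ := hmem
  have hcomp : Integrable (fun x => q' (AffineMap.lineMap p.1 x θ)) μ := by
    simpa only [AffineMap.lineMap_apply_module, add_comm] using
      (hq'.comp_add_right ((1 - θ) • p.1)).comp_smul hθ.1.ne'
  have hint := integral_mono
    ((hq.sub (integrable_min_const hq (Real.exp_pos (-T)).le)).const_mul _) hcomp hpoint
  rw [integral_const_mul, integral_comp_lineMap, abs_of_nonneg (by have := hθ.1; positivity),
    smul_eq_mul, le_inv_mul_iff₀ (pow_pos hθ.1 _)] at hint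
  rwa [mul_assoc]

theorem exists_one_sub_le_pow_mul_exp (d : ℕ) (b : ℝ) {κ : ℝ} (hκ : 0 < κ) :
    ∃ θ ∈ Ioo (0 : ℝ) 1, 1 - κ ≤ θ ^ d * Real.exp (-((1 - θ) * b)) := by
  have hcont : Continuous fun θ : ℝ => θ ^ d * Real.exp (-((1 - θ) * b)) := by fun_prop
  have hlim : Tendsto (fun θ : ℝ => θ ^ d * Real.exp (-((1 - θ) * b)))
      (nhdsWithin 1 (Iio 1)) (nhds 1) := by
    simpa using (hcont.tendsto 1).mono_left nhdsWithin_le_nhds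
  obtain ⟨θ, hθ, hθmem⟩ := ((hlim.eventually (lt_mem_nhds (sub_lt_self 1 hκ))).and
    (Ioo_mem_nhdsLT one_pos)).exists
  exact ⟨θ, hθmem, hθ.le⟩

theorem IsEnvelope.exists_forall_integral_sub_le {D : E → ℝ} {B : ℝ} (hD : IsEnvelope μ D B)
    {δ : ℝ} (hδ : 0 < δ) : ∃ T, ∀ m, ∃ θ ∈ Ioo (0 : ℝ) 1, ∀ p : E × ℝ, p.2 ≤ m → ∀ q q' : E → ℝ,
      Integrable q μ → q ≤ D → Integrable q' μ → 0 ≤ q' →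
      (∀ v ∈ logEpi q, v.2 ≤ T → AffineMap.lineMap p v θ ∈ logEpi q') →
      ∫ x, q x ∂μ - δ ≤ ∫ x, q' x ∂μ := by
  obtain ⟨T, hT⟩ := ((tendsto_integral_min_exp_neg hD.integrable hD.nonneg).eventually
    (gt_mem_nhds (half_pos hδ))).exists
  set I := ∫ x, D x ∂μ
  have hI : 0 ≤ I := integral_nonneg hD.nonneg
  refine ⟨T, fun m => ?_⟩
  obtain ⟨θ, hθ, hfactor⟩ := exists_one_sub_le_pow_mul_exp (Module.finrank ℝ E) (B + m)
    (show 0 < δ / (2 * (I + 1)) by positivity)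
  refine ⟨θ, hθ, fun p hp q q' hq hqD hq' hq'0 hcontr => ?_⟩
  have hmain := mul_integral_sub_min_le_of_lineMap_mem_logEpi hq
    (fun x => (hqD x).trans (hD.le_exp x)) hq' hq'0 ⟨hθ.1, hθ.2.le⟩ hcontr
  have hminq := integrable_min_const hq (Real.exp_pos (-T)).le
  have hmin : ∫ x, min (q x) (Real.exp (-T)) ∂μ ≤ δ / 2 :=
    (integral_mono hminq (integrable_min_const hD.integrable (Real.exp_pos _).le)
      fun x => min_le_min_right _ (hqD x)).trans hT.le
  set J := ∫ x, (q x - min (q x) (Real.exp (-T))) ∂μ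
  have hJ0 : 0 ≤ J := integral_nonneg fun x => sub_nonneg.2 (min_le_left _ _)
  have hJI : J ≤ I := integral_mono (hq.sub hminq) hD.integrable fun x => by
    rcases min_choice (q x) (Real.exp (-T)) with h | h
    · rw [h, sub_self]
      exact hD.nonneg x
    · simpa only [h] using (sub_le_self _ (Real.exp_pos _).le).trans (hqD x)
  have hloss : δ / (2 * (I + 1)) * J ≤ δ / 2 := by
    rw [div_mul_eq_mul_div, div_le_div_iff₀ (by positivity) two_pos]
    nlinarith
  have hJeq : J = ∫ x, q x ∂μ - ∫ x, min (q x) (Real.exp (-T)) ∂μ := integral_sub hq hminq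
  calc ∫ x, q x ∂μ - δ ≤ (1 - δ / (2 * (I + 1))) * J := by linarith
    _ ≤ θ ^ Module.finrank ℝ E * Real.exp (-((1 - θ) * (B + m))) * J := by gcongr
    _ ≤ θ ^ Module.finrank ℝ E * Real.exp (-((1 - θ) * (B + p.2))) * J := by
        have := hθ.1
        have := sub_pos.2 hθ.2
        gcongr
    _ ≤ ∫ x, q' x ∂μ := hmain

end Mass

/-! ### Log affine functions -/

section EpiHull

open scoped Pointwise

variable {E ι : Type*} [AddCommGroup E] [Module ℝ E] {X : ι → E × ℝ}

/-- The epigraph of the inner linearization built from the points `X i`, written as the sum of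
their convex hull and the vertical upward ray. -/
def epiHull (X : ι → E × ℝ) : Set (E × ℝ) :=
  convexHull ℝ (range X) + {0} ×ˢ Ici 0

theorem mem_epiHull_iff {v : E × ℝ} :
    v ∈ epiHull X ↔ ∃ s ≤ v.2, (v.1, s) ∈ convexHull ℝ (range X) := by
  constructor
  · rintro ⟨w, hw, ⟨_, t⟩, ⟨rfl, ht⟩, rfl⟩
    exact ⟨w.2, le_add_of_nonneg_right ht, by simpa using hw⟩
  · rintro ⟨s, hs, hv⟩
    exact ⟨_, hv, (0, v.2 - s), ⟨rfl, sub_nonneg.2 hs⟩, by simp⟩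

theorem convex_epiHull (X : ι → E × ℝ) : Convex ℝ (epiHull X) :=
  (convex_convexHull ℝ _).add ((convex_singleton 0).prod (convex_Ici 0))

theorem isUpwardClosed_epiHull (X : ι → E × ℝ) : IsUpwardClosed (epiHull X) := fun _ _ _ hst hs =>
  have ⟨u, hu, hmem⟩ := mem_epiHull_iff.1 hs
  mem_epiHull_iff.2 ⟨u, hu.trans hst, hmem⟩

theorem mem_epiHull (X : ι → E × ℝ) (i : ι) : X i ∈ epiHull X :=
  mem_epiHull_iff.2 ⟨_, le_rfl, subset_convexHull ℝ _ (mem_range_self i)⟩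

theorem epiHull_subset {C : Set (E × ℝ)} (hC : Convex ℝ C) (hup : IsUpwardClosed C)
    (hX : ∀ i, X i ∈ C) : epiHull X ⊆ C := fun _ hv =>
  have ⟨_, hs, hmem⟩ := mem_epiHull_iff.1 hv
  hup hs (convexHull_min (range_subset_iff.2 hX) hC hmem)

theorem le_snd_of_mem_epiHull {b : ℝ} (hb : ∀ i, b ≤ (X i).2) {v : E × ℝ} (hv : v ∈ epiHull X) :
    b ≤ v.2 :=
  epiHull_subset (C := {v | b ≤ v.2}) (convex_halfSpace_ge (LinearMap.snd ℝ E ℝ).isLinear b)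
    (fun _ _ _ hst hs => le_trans hs hst) hb hv

theorem lineMap_mem_epiHull (P : E × ℝ) {θ : ℝ} (hθ : 0 ≤ θ) {v : E × ℝ} (hv : v ∈ epiHull X) :
    AffineMap.lineMap P v θ ∈ epiHull fun i => AffineMap.lineMap P (X i) θ := by
  simp only [← AffineMap.homothety_eq_lineMap]
  refine epiHull_subset ((convex_epiHull _).affine_preimage (AffineMap.homothety P θ))
    (fun x s t hst hs => ?_) (fun i => mem_epiHull _ i) hv
  simp only [mem_preimage, AffineMap.homothety_eq_lineMap] at hs ⊢
  exact (isUpwardClosed_epiHull _).lineMap_mem P hθ hst hs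

/-- The projective map that fixes the level of `p` and draws each higher point `v` towards `p`,
the more the higher it is, so that all images lie less than `R` above `p`. -/
def compress (p : E × ℝ) (R : ℝ) (v : E × ℝ) : E × ℝ :=
  AffineMap.lineMap p v (1 + (v.2 - p.2) / R)⁻¹

variable {p v : E × ℝ} {R : ℝ}

theorem compress_self (p : E × ℝ) (R : ℝ) : compress p R p = p :=
  AffineMap.lineMap_same_apply _ _

theorem one_le_one_add_sub_div (hR : 0 < R) {s t : ℝ} (hst : s ≤ t) : 1 ≤ 1 + (t - s) / R :=
  le_add_of_nonneg_right (div_nonneg (sub_nonneg.2 hst) hR.le)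

theorem snd_compress_le (hR : 0 < R) (hv : p.2 ≤ v.2) : (compress p R v).2 ≤ p.2 + R := by
  have hκ := one_le_one_add_sub_div hR hv
  rw [compress, AffineMap.snd_lineMap, AffineMap.lineMap_apply_ring', add_comm]
  gcongr
  rw [inv_mul_le_iff₀ (zero_lt_one.trans_le hκ), add_mul, one_mul, div_mul_cancel₀ _ hR.ne']
  exact le_add_of_nonneg_left hR.le

theorem compress_mem {C : Set (E × ℝ)} (hC : Convex ℝ C) (hR : 0 < R) (hv : p.2 ≤ v.2)
    (hpC : p ∈ C) (hvC : v ∈ C) : compress p R v ∈ C :=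
  have hκ := one_le_one_add_sub_div hR hv
  hC.lineMap_mem hpC hvC ⟨inv_nonneg.2 (zero_le_one.trans hκ), inv_le_one_of_one_le₀ hκ⟩

-- `compress p R` is projective above the level of `p`, hence maps segments to segments.
theorem convex_setOf_compress_mem {C : Set (E × ℝ)} (hC : Convex ℝ C) (p : E × ℝ) (hR : 0 < R) :
    Convex ℝ {v | p.2 ≤ v.2 ∧ compress p R v ∈ C} := by
  rintro v ⟨hv, hvC⟩ w ⟨hw, hwC⟩ a b ha hb hab
  have hvw : p.2 ≤ (a • v + b • w).2 :=
    (convex_halfSpace_ge (LinearMap.snd ℝ E ℝ).isLinear p.2) hv hw ha hb hab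
  refine ⟨hvw, ?_⟩
  have hκv := one_le_one_add_sub_div hR hv
  have hκw := one_le_one_add_sub_div hR hw
  have hκ := one_le_one_add_sub_div hR hvw
  have hsum : 1 + ((a • v + b • w).2 - p.2) / R =
      a * (1 + (v.2 - p.2) / R) + b * (1 + (w.2 - p.2) / R) := by
    obtain rfl := eq_sub_of_add_eq hab
    simp only [Prod.snd_add, Prod.smul_snd, smul_eq_mul]
    ring
  unfold compress at hvC hwC ⊢
  set κv := 1 + (v.2 - p.2) / R
  set κw := 1 + (w.2 - p.2) / R
  set κ := 1 + ((a • v + b • w).2 - p.2) / R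
  clear_value κv κw κ
  have hκ0 : 0 < κ := by positivity
  convert hC hvC hwC (a := a * κv / κ) (b := b * κw / κ) (by positivity) (by positivity)
    (by rw [← add_div, ← hsum, div_self hκ0.ne']) using 1
  have hκv0 : κv ≠ 0 := by positivity
  have hκw0 : κw ≠ 0 := by positivity
  simp only [AffineMap.lineMap_apply_module']
  match_scalars <;> field_simp
  linear_combination hsum + hab

theorem lineMap_mem_epiHull_compress (hp : ∀ i, p.2 ≤ (X i).2) (hpX : p ∈ range X) (hR : 0 < R)
    {σ : ℝ} (hσ : 0 ≤ σ) (hv : v ∈ epiHull X) (hσv : σ * (1 + (v.2 - p.2) / R) ≤ 1) :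
    AffineMap.lineMap p v σ ∈ epiHull fun i => compress p R (X i) := by
  obtain ⟨s, hs, hmem⟩ := mem_epiHull_iff.1 hv
  have hconv := convex_epiHull fun i => compress p R (X i)
  have hvertex : range X ⊆ {v | p.2 ≤ v.2 ∧ compress p R v ∈ epiHull fun i => compress p R (X i)} :=
    range_subset_iff.2 fun i => ⟨hp i, mem_epiHull (fun j => compress p R (X j)) i⟩
  obtain ⟨hps, hcomp⟩ := convexHull_min hvertex (convex_setOf_compress_mem hconv p hR) hmem
  have hpK : p ∈ epiHull fun i => compress p R (X i) := by
    obtain ⟨i, rfl⟩ := hpX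
    simpa only [compress_self] using mem_epiHull (fun j => compress (X i) R (X j)) i
  have hκ := one_le_one_add_sub_div hR hps
  have hσs : σ * (1 + (s - p.2) / R) ≤ 1 := hσv.trans' (by gcongr)
  have hbelow := hconv.lineMap_mem hpK hcomp ⟨mul_nonneg hσ (zero_le_one.trans hκ), hσs⟩
  rw [compress, AffineMap.lineMap_lineMap_right,
    mul_inv_cancel_right₀ (zero_lt_one.trans_le hκ).ne'] at hbelow
  exact (isUpwardClosed_epiHull _).lineMap_mem p hσ hs hbelow

end EpiHull

section LogAffine

variable {E ι : Type*} [AddCommGroup E] [Module ℝ E] [TopologicalSpace E] [IsTopologicalAddGroup E]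
  [ContinuousSMul ℝ E] [T1Space E]

theorem isClosed_epiHull [Finite ι] (X : ι → E × ℝ) : IsClosed (epiHull X) :=
  (isClosed_singleton.prod isClosed_Ici).add_left_of_isCompact
    ((finite_range X).isCompact_convexHull ℝ)

/-- The log affine function `exp (-p)`, where `p` is the inner linearization built from the points
`X i`. -/
def logAffine (X : ι → E × ℝ) : E → ℝ :=
  ofLogEpi (epiHull X)

theorem logEpi_logAffine [Finite ι] (X : ι → E × ℝ) : logEpi (logAffine X) = epiHull X := by
  obtain ⟨b, hb⟩ := Finite.bddBelow_range fun i => (X i).2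
  exact logEpi_ofLogEpi (isClosed_epiHull X) (isUpwardClosed_epiHull X)
    fun v => le_snd_of_mem_epiHull (forall_mem_range.1 hb)

theorem isLogConcave_logAffine [Finite ι] (X : ι → E × ℝ) : IsLogConcave (logAffine X) where
  nonneg := ofLogEpi_nonneg _
  convex_logEpi := by
    rw [logEpi_logAffine]
    exact convex_epiHull X

theorem IsLogConcave.logAffine_le [Finite ι] {g : E → ℝ} (hg : IsLogConcave g) {X : ι → E × ℝ}
    (hX : ∀ i, X i ∈ logEpi g) : logAffine X ≤ g := by
  refine le_of_logEpi_subset hg.nonneg ?_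
  rw [logEpi_logAffine]
  exact epiHull_subset hg.convex_logEpi (isUpwardClosed_logEpi g) hX

end LogAffine

/-! ### Approximation of log affine minorants -/

section Approximation

theorem mul_one_add_div_le_one {θ a A : ℝ} (hθ : θ ∈ Ioo 0 1) (hA : 0 < A) (haA : a ≤ A) :
    θ * (1 + a / (A * θ / (1 - θ))) ≤ 1 := by
  have hθ0 := hθ.1
  have hθ' : 0 < 1 - θ := sub_pos.2 hθ.2
  calc θ * (1 + a / (A * θ / (1 - θ))) ≤ θ * (1 + A / (A * θ / (1 - θ))) := by gcongr
    _ = 1 := by field_simp; ring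

variable {E : Type*} [NormedAddCommGroup E] [NormedSpace ℝ E] [FiniteDimensional ℝ E]
  [MeasurableSpace E] [BorelSpace E] {μ : Measure E} [μ.IsAddHaarMeasure] {D : E → ℝ} {B : ℝ}

theorem IsEnvelope.exists_forall_integral_logAffine_sub_le (hD : IsEnvelope μ D B) {δ : ℝ}
    (hδ : 0 < δ) (b : ℝ) : ∃ U, ∀ g, IsLogConcave g → g ≤ D → ∀ P ∈ logEpi g, P.2 ≤ b →
      ∀ (κ : Type*) [Finite κ] [Nonempty κ] (X : κ → E × ℝ), (∀ j, X j ∈ logEpi g) →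
      ∃ Y : κ → E × ℝ, (∀ j, Y j ∈ logEpi g ∧ (Y j).2 ≤ U) ∧
        ∫ x, logAffine X x ∂μ - δ ≤ ∫ x, logAffine Y x ∂μ := by
  obtain ⟨T, hT⟩ := hD.exists_forall_integral_sub_le hδ
  obtain ⟨θ, hθ, hmass⟩ := hT (max T b)
  have hθ' : 0 < 1 - θ := sub_pos.2 hθ.2
  set R := (|T + B| + 1) * θ / (1 - θ)
  have hR : 0 < R := by have := hθ.1; positivity
  refine ⟨max (T + R) b, fun g hg hgD P hP hPb κ _ _ X hX => ?_⟩
  have hdom : ∀ Z : κ → E × ℝ, (∀ j, Z j ∈ logEpi g) →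
      logAffine Z ≤ D ∧ Integrable (logAffine Z) μ := fun Z hZ =>
    have hZD := (hg.logAffine_le hZ).trans hgD
    ⟨hZD, (isLogConcave_logAffine Z).integrable_of_le hD.integrable hZD⟩
  obtain ⟨i₀, hmin⟩ := Finite.exists_min fun j => (X j).2
  have hcontract : ∀ (p : E × ℝ) (Y : κ → E × ℝ), p.2 ≤ max T b → (∀ j, Y j ∈ logEpi g) →
      (∀ v ∈ epiHull X, v.2 ≤ T → AffineMap.lineMap p v θ ∈ epiHull Y) →
      ∫ x, logAffine X x ∂μ - δ ≤ ∫ x, logAffine Y x ∂μ := fun p Y hp hY h =>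
    hmass p hp _ _ (hdom X hX).2 (hdom X hX).1 (hdom Y hY).2 (isLogConcave_logAffine Y).nonneg
      (by simpa only [logEpi_logAffine] using h)
  rcases le_or_gt (X i₀).2 T with hlow | hhigh
  · have hYmem : ∀ j, compress (X i₀) R (X j) ∈ logEpi g := fun j =>
      compress_mem hg.convex_logEpi hR (hmin j) (hX i₀) (hX j)
    refine ⟨fun j => compress (X i₀) R (X j), fun j => ⟨hYmem j, le_max_of_le_left ?_⟩,
      hcontract _ _ (le_max_of_le_left hlow) hYmem fun v hv hvT =>
        lineMap_mem_epiHull_compress hmin (mem_range_self i₀) hR hθ.1.le hv ?_⟩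
    · linarith [snd_compress_le hR (hmin j)]
    · refine mul_one_add_div_le_one hθ (by positivity) ?_
      linarith [neg_le_snd_of_mem_logEpi (fun x => (hgD x).trans (hD.le_exp x)) (hX i₀),
        le_abs_self (T + B)]
  · -- No part of the hull lies below height `T`, so a constant family is good enough.
    exact ⟨fun _ => P, fun _ => ⟨hP, le_max_of_le_right hPb⟩,
      hcontract P _ (le_max_of_le_right hPb) (fun _ => hP) fun v hv hvT =>
        absurd (hhigh.trans_le (le_snd_of_mem_epiHull hmin hv)) hvT.not_gt⟩

variable {ι : Type*} {l : Filter ι} {G H : ι → E → ℝ} {z : E} {r c : ℝ}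

theorem eventually_exists_integral_logAffine_sub_le (hD : IsEnvelope μ D B) (hr : 0 < r)
    (hG : ∀ᶠ i in l, IsDominated z r c D (G i)) (hH : ∀ᶠ i in l, IsDominated z r c D (H i))
    (hGH : TendstoInMeasure μ (fun i => G i - H i) l 0) {δ : ℝ} (hδ : 0 < δ) :
    ∀ᶠ i in l, ∀ (κ : Type*) [Finite κ] [Nonempty κ] (X : κ → E × ℝ),
      (∀ j, X j ∈ logEpi (G i)) → ∃ Y : κ → E × ℝ, (∀ j, Y j ∈ logEpi (H i)) ∧
        ∫ x, logAffine X x ∂μ - δ ≤ ∫ x, logAffine Y x ∂μ := by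
  obtain ⟨U, hU⟩ := hD.exists_forall_integral_logAffine_sub_le (half_pos hδ) c
  obtain ⟨T, hT⟩ := hD.exists_forall_integral_sub_le (half_pos hδ)
  obtain ⟨θ, hθ, hmass⟩ := hT (c + 1)
  filter_upwards [hG, hH, eventually_lineMap_mem_logEpi hr
    (hG.mono fun _ h => h.toIsLogConcave) (hG.mono fun _ h => h.exp_le_of_mem_ball)
    (hH.mono fun _ h => h.toIsLogConcave) hGH ⟨hθ.1.le, hθ.2⟩ U] with i hGi hHi hmem κ _ _ X hX
  obtain ⟨Y, hY, hXY⟩ := hU (G i) hGi.toIsLogConcave hGi.le_dom (z, c)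
    (hGi.exp_le_of_mem_ball z (mem_ball_self hr)) le_rfl κ X hX
  have hYD := (hGi.logAffine_le fun j => (hY j).1).trans hGi.le_dom
  have hYH : ∀ j, AffineMap.lineMap (z, c + 1) (Y j) θ ∈ logEpi (H i) := fun j =>
    hmem _ (hY j).1 (hY j).2
  have hYHD := (hHi.logAffine_le hYH).trans hHi.le_dom
  refine ⟨_, hYH, ?_⟩
  have hYY := hmass (z, c + 1) le_rfl _ _
    ((isLogConcave_logAffine Y).integrable_of_le hD.integrable hYD) hYD
    ((isLogConcave_logAffine _).integrable_of_le hD.integrable hYHD)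
    (isLogConcave_logAffine _).nonneg fun v hv _ => by
      rw [logEpi_logAffine] at hv ⊢
      exact lineMap_mem_epiHull _ hθ.1.le hv
  linarith

theorem eventually_integral_sub_le (hD : IsEnvelope μ D B) (hr : 0 < r)
    (hG : ∀ᶠ i in l, IsDominated z r c D (G i)) (hH : ∀ᶠ i in l, IsDominated z r c D (H i))
    (hGH : TendstoInMeasure μ (fun i => G i - H i) l 0) {δ : ℝ} (hδ : 0 < δ) :
    ∀ᶠ i in l, ∫ x, G i x ∂μ - δ ≤ ∫ x, H i x ∂μ := by
  obtain ⟨T, hT⟩ := hD.exists_forall_integral_sub_le hδ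
  obtain ⟨θ, hθ, hmass⟩ := hT (c + 1)
  filter_upwards [hG, hH, eventually_lineMap_mem_logEpi hr
    (hG.mono fun _ h => h.toIsLogConcave) (hG.mono fun _ h => h.exp_le_of_mem_ball)
    (hH.mono fun _ h => h.toIsLogConcave) hGH ⟨hθ.1.le, hθ.2⟩ T] with i hGi hHi hmem
  exact hmass (z, c + 1) le_rfl _ _ (hGi.integrable_of_le hD.integrable hGi.le_dom) hGi.le_dom
    (hHi.integrable_of_le hD.integrable hHi.le_dom) hHi.nonneg hmem

end Approximation

/-! ### Extended-real-valued convex functions -/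

section Eucl

variable {n : ℕ}

theorem exp_le_expNeg_iff {t : EReal} (ht : t ≠ ⊥) {s : ℝ} :
    Real.exp (-s) ≤ expNeg t ↔ t ≤ s := by
  induction t with
  | bot => exact absurd rfl ht
  | top => simp [expNeg, Real.exp_pos]
  | coe u => simp [expNeg]

theorem negLog_le_coe_iff {y s : ℝ} : negLog y ≤ s ↔ Real.exp (-s) ≤ y := by
  unfold negLog
  split_ifs with hy
  · simp [hy.trans_lt (Real.exp_pos _)]
  · rw [EReal.coe_le_coe_iff, ← Real.le_log_iff_exp_le (not_le.1 hy), neg_le]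

theorem expNeg_nonneg (t : EReal) : 0 ≤ expNeg t := by
  unfold expNeg
  split_ifs <;> positivity

theorem expNeg_negLog {y : ℝ} (hy : 0 ≤ y) : expNeg (negLog y) = y := by
  rcases hy.eq_or_lt with rfl | hy
  · simp [expNeg, negLog]
  · simp [expNeg, negLog, hy.not_ge, Real.exp_log hy]

theorem expNeg_ne_zero_iff {t : EReal} (ht : t ≠ ⊥) : expNeg t ≠ 0 ↔ t ≠ ⊤ := by
  simp [expNeg, ht]

theorem tendsto_expNeg_top : Tendsto expNeg (nhds ⊤) (nhds 0) := by
  refine tendsto_order.2 ⟨fun a ha => .of_forall fun t => ha.trans_le (expNeg_nonneg t),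
    fun a ha => ?_⟩
  filter_upwards [lt_mem_nhds (EReal.coe_lt_top (-Real.log a))] with t ht
  rwa [← not_le, ← Real.exp_log ha, ← neg_neg (Real.log a), exp_le_expNeg_iff ht.ne_bot, not_le]

theorem logEpi_expNeg {ψ : Eucl n → EReal} (hψ : ∀ x, ψ x ≠ ⊥) :
    logEpi (fun x => expNeg (ψ x)) = epi ψ :=
  ext fun v => exp_le_expNeg_iff (hψ v.1)

theorem epi_negLog (g : Eucl n → ℝ) : epi (fun x => negLog (g x)) = logEpi g :=
  ext fun _ => negLog_le_coe_iff

namespace MemLCc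

variable {f : Eucl n → ℝ}

theorem isLogConcave (hf : MemLCc f) : IsLogConcave f := by
  obtain ⟨ψ, hbot, hconv, -, -, -, -, -, hfψ⟩ := hf
  obtain rfl : f = fun x => expNeg (ψ x) := funext hfψ
  exact ⟨fun _ => expNeg_nonneg _, (logEpi_expNeg hbot).symm ▸ hconv⟩

theorem tendsto_cocompact (hf : MemLCc f) : Tendsto f (cocompact _) (nhds 0) := by
  obtain ⟨ψ, -, -, -, hcoercive, -, -, -, hfψ⟩ := hf
  obtain rfl : f = fun x => expNeg (ψ x) := funext hfψ
  exact tendsto_expNeg_top.comp hcoercive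

theorem affineSpan_support (hf : MemLCc f) : affineSpan ℝ (Function.support f) = ⊤ := by
  obtain ⟨ψ, hbot, -, -, -, -, -, hspan, hfψ⟩ := hf
  rw [← hspan]
  congr 1
  ext x
  rw [Function.mem_support, hfψ, expNeg_ne_zero_iff (hbot x), mem_ofPred_eq]

end MemLCc

open scoped Pointwise in
theorem convexHull_verticalRays {k : ℕ} (x : Fin k → Eucl n) (t : Fin k → ℝ) :
    convexHull ℝ (verticalRays x t) = epiHull fun i => (x i, t i) := by
  have hrays : verticalRays x t = range (fun i => (x i, t i)) + {0} ×ˢ Ici 0 := by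
    ext v
    simp only [verticalRays, mem_iUnion]
    constructor
    · rintro ⟨i, hi, ht⟩
      exact ⟨_, mem_range_self i, (0, v.2 - t i), ⟨rfl, sub_nonneg.2 ht⟩, by simp [← hi]⟩
    · rintro ⟨_, ⟨i, rfl⟩, ⟨_, s⟩, ⟨rfl, hs⟩, rfl⟩
      exact ⟨i, add_zero _, le_add_of_nonneg_right hs⟩
  have hray : Convex ℝ ({0} ×ˢ Ici 0 : Set (Eucl n × ℝ)) :=
    (convex_singleton 0).prod (convex_Ici 0)
  rw [hrays, convexHull_add, hray.convexHull_eq, epiHull]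

theorem mem_PN_iff {N : ℕ} {g q : Eucl n → ℝ} :
    q ∈ PN N g ↔ ∃ k, 1 ≤ k ∧ k ≤ N ∧ ∃ X : Fin k → Eucl n × ℝ,
      (∀ i, X i ∈ logEpi g) ∧ q = logAffine X := by
  refine exists_congr fun k => and_congr_right fun _ => and_congr_right fun _ => ⟨?_, ?_⟩
  · rintro ⟨p, ⟨x, t, hxt, hp⟩, hq⟩
    obtain rfl : q = fun x => expNeg (p x) := funext hq
    rw [convexHull_verticalRays, ← logEpi_logAffine] at hp
    have hbot : ∀ y, p y ≠ ⊥ := fun y hy => by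
      set L := logAffine (fun i => (x i, t i)) y
      have hmem : (y, -L) ∈ logEpi (logAffine fun i => (x i, t i)) := hp ▸ hy.trans_le bot_le
      rw [mem_logEpi, neg_neg] at hmem
      linarith [Real.add_one_le_exp L]
    exact ⟨fun i => (x i, t i), fun i => negLog_le_coe_iff.1 (hxt i),
      eq_of_logEpi_eq (fun _ => expNeg_nonneg _) (isLogConcave_logAffine _).nonneg
        ((logEpi_expNeg hbot).trans hp)⟩
  · rintro ⟨X, hX, rfl⟩
    refine ⟨fun x => negLog (logAffine X x),
      ⟨fun i => (X i).1, fun i => (X i).2, fun i => negLog_le_coe_iff.2 (hX i), ?_⟩,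
      fun x => (expNeg_negLog ((isLogConcave_logAffine X).nonneg x)).symm⟩
    rw [epi_negLog, logEpi_logAffine, convexHull_verticalRays]

end Eucl

/-! ### Continuity of the functional -/

section Gfun

variable {n N : ℕ}

theorem Gfun_le_sub {h q : Eucl n → ℝ} (hh : IsLogConcave h) (hint : Integrable h)
    (hq : q ∈ PN N h) : Gfun N h ≤ totalMass h - totalMass q := by
  refine csInf_le ⟨0, ?_⟩ ⟨q, hq, rfl⟩
  rintro _ ⟨q, hq, rfl⟩
  obtain ⟨k, -, -, X, hX, rfl⟩ := mem_PN_iff.1 hq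
  exact sub_nonneg.2 (integral_mono_of_nonneg (.of_forall (isLogConcave_logAffine X).nonneg) hint
    (.of_forall (hh.logAffine_le hX)))

theorem PN_nonempty (hN : 1 ≤ N) {g : Eucl n → ℝ} {v : Eucl n × ℝ} (hv : v ∈ logEpi g) :
    (PN N g).Nonempty :=
  ⟨_, mem_PN_iff.2 ⟨1, le_rfl, hN, fun _ => v, fun _ => hv, rfl⟩⟩

theorem Gfun_le_add (hN : 1 ≤ N) {g h : Eucl n → ℝ} {δ : ℝ} {v : Eucl n × ℝ} (hv : v ∈ logEpi g)
    (hh : IsLogConcave h) (hint : Integrable h)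
    (happrox : ∀ q ∈ PN N g, ∃ q' ∈ PN N h, totalMass q - δ ≤ totalMass q') :
    Gfun N h ≤ Gfun N g + (totalMass h - totalMass g) + δ := by
  rw [← sub_le_iff_le_add, ← sub_le_iff_le_add]
  obtain ⟨q₀, hq₀⟩ := PN_nonempty hN hv
  refine le_csInf ⟨_, q₀, hq₀, rfl⟩ ?_
  rintro _ ⟨q, hq, rfl⟩
  obtain ⟨q', hq', hle⟩ := happrox q hq
  linarith [Gfun_le_sub hh hint hq']

variable {ι : Type*} {l : Filter ι}

theorem eventually_Gfun_le_add (hN : 1 ≤ N) {G H : ι → Eucl n → ℝ} {z : Eucl n} {r c : ℝ}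
    {D : Eucl n → ℝ} {B : ℝ} (hD : IsEnvelope volume D B) (hr : 0 < r)
    (hG : ∀ᶠ i in l, IsDominated z r c D (G i)) (hH : ∀ᶠ i in l, IsDominated z r c D (H i))
    (hGH : TendstoInMeasure volume (fun i => G i - H i) l 0) {δ : ℝ} (hδ : 0 < δ) :
    ∀ᶠ i in l, Gfun N (H i) ≤ Gfun N (G i) + δ := by
  filter_upwards [hG, hH, eventually_exists_integral_logAffine_sub_le hD hr hG hH hGH (half_pos hδ),
    eventually_integral_sub_le hD hr hH hG (tendstoInMeasure_sub_zero_comm.1 hGH) (half_pos hδ)]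
    with i hGi hHi happrox hmass
  have hzG : (z, c) ∈ logEpi (G i) := hGi.exp_le_of_mem_ball z (mem_ball_self hr)
  have hGfun := Gfun_le_add hN hzG hHi.toIsLogConcave (δ := δ / 2)
    (hHi.integrable_of_le hD.integrable hHi.le_dom) fun q hq => by
      obtain ⟨k, hk, hkN, X, hX, rfl⟩ := mem_PN_iff.1 hq
      have : Nonempty (Fin k) := ⟨⟨0, hk⟩⟩
      obtain ⟨Y, hY, hle⟩ := happrox (Fin k) X hX
      exact ⟨_, mem_PN_iff.2 ⟨k, hk, hkN, Y, hY, rfl⟩, hle⟩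
  unfold totalMass at hGfun
  linarith

theorem Gfun_continuous_Lp_general (hN : 1 ≤ N) {f : Eucl n → ℝ} {F : ι → Eucl n → ℝ}
    (hf : IsLogConcave f) (hf0 : Tendsto f (cocompact _) (nhds 0))
    (hspan : affineSpan ℝ (Function.support f) = ⊤) (hF : ∀ i, IsLogConcave (F i))
    (hconv : TendstoInMeasure volume F l f) :
    Tendsto (fun i => Gfun N (F i)) l (nhds (Gfun N f)) := by
  obtain ⟨z, r, hr, c, D, B, hD, hfD, hFD⟩ := exists_isDominated hf hf0 hspan hF hconv
  have hsub := tendstoInMeasure_sub_zero_iff.2 hconv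
  refine Metric.tendsto_nhds.2 fun ε hε => ?_
  filter_upwards [eventually_Gfun_le_add hN hD hr (.of_forall fun _ => hfD) hFD
      (tendstoInMeasure_sub_zero_comm.1 hsub) (half_pos hε),
    eventually_Gfun_le_add hN hD hr hFD (.of_forall fun _ => hfD) hsub (half_pos hε)]
    with i hupper hlower
  rw [Real.dist_eq, abs_sub_lt_iff]
  constructor <;> linarith

end Gfun

/-- The functional `G_{n,N}` is continuous on `LC_c(ℝⁿ)` with respect to the
`L^p` metric: if `f, f₁, f₂, … ∈ LC_c(ℝⁿ)` and `‖f_m − f‖_p → 0`, then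
`G_{n,N}(f_m) → G_{n,N}(f)`. -/
theorem Gfun_continuous_Lp
    (n N : ℕ) (hn : 1 ≤ n) (hN : n + 2 ≤ N) (p : ℝ) (hp : 1 ≤ p)
    (f : Eucl n → ℝ) (F : ℕ → Eucl n → ℝ)
    (hf : MemLCc f) (hF : ∀ m, MemLCc (F m))
    (hconv : Tendsto (fun m => eLpNorm (fun x => F m x - f x) (ENNReal.ofReal p) volume)
      atTop (nhds 0)) :
    Tendsto (fun m => Gfun N (F m)) atTop (nhds (Gfun N f)) := by
  refine Gfun_continuous_Lp_general (by lia) hf.isLogConcave hf.tendsto_cocompact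
    hf.affineSpan_support (fun m => (hF m).isLogConcave) ?_
  exact tendstoInMeasure_of_tendsto_eLpNorm (by simpa using one_pos.trans_le hp)
    (fun m => ((hF m).isLogConcave.aemeasurable volume).aestronglyMeasurable)
    (hf.isLogConcave.aemeasurable volume).aestronglyMeasurable hconv
end
end

section
/- (Macbeath's inequality.) Fix integers n ≥ 1 and N ≥ n+2. For every convex body K ⊂ ℝⁿ, min over polytopes P ⊆ K with at most N vertices of vol_n(K \ P) is at most min over polytopes Q ⊆ K* with at most N vertices of vol_n(K* \ Q), where K* is the closed Euclidean ball centered at the origin with vol_n(K*) = vol_n(K). -/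
open MeasureTheory Filter Set Metric

noncomputable section

/-- `𝒞_N^in(K)`: polytopes with at most `N` vertices contained in `K`. -/
def PolyIn {n : ℕ} (N : ℕ) (K : Set (Eucl n)) : Set (Set (Eucl n)) :=
  {P : Set (Eucl n) |
    (∃ S : Finset (Eucl n), S.card ≤ N ∧ P = convexHull ℝ (S : Set (Eucl n))) ∧ P ⊆ K}

/-!
Steiner symmetrization preserves volume and does not increase the largest volume of an inscribed
polytope with at most `N` vertices: an inscribed polytope of the symmetral is contained in the mean
of two polytopes inscribed in `K`, one of which is therefore at least as large. If a convex body
of volume at least that of the ball `B` misses part of `B`, averaging over translations yields a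
direction in which symmetrization increases its overlap with `B` by an amount depending only on
the volume missed and the radius of a ball around the body. Hence some iterated symmetral of `K`
misses arbitrarily little of `B`; being convex, it then contains a concentric ball nearly as large
as `B`, and scaling transfers the inscribed polytopes of `B` to `K` in the limit.
-/

section Polytopes

open scoped Pointwise

section Module

variable {E : Type*} [AddCommGroup E] [Module ℝ E]

/-- The polytopes with at most `N` vertices contained in `K`: `PolyIn` in an arbitrary real vector
space. -/
def inscribedPolytopes (N : ℕ) (K : Set E) : Set (Set E) :=
  {P | (∃ S : Finset E, S.card ≤ N ∧ P = convexHull ℝ (S : Set E)) ∧ P ⊆ K}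

/-- The largest volume of a polytope with at most `N` vertices inscribed in `K`, encoded as a
supremum so that its attainment need not be shown. -/
def maxPolytopeVolume [MeasureSpace E] (N : ℕ) (K : Set E) : ENNReal :=
  ⨆ P ∈ inscribedPolytopes N K, volume P

lemma empty_mem_inscribedPolytopes (N : ℕ) (K : Set E) : ∅ ∈ inscribedPolytopes N K :=
  ⟨⟨∅, by simp⟩, empty_subset K⟩

variable [MeasureSpace E] {N : ℕ} {K L : Set E}

lemma volume_convexHull_le_maxPolytopeVolume {S : Finset E} (hS : S.card ≤ N)
    (hSK : convexHull ℝ (S : Set E) ⊆ K) :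
    volume (convexHull ℝ (S : Set E)) ≤ maxPolytopeVolume N K :=
  le_iSup₂_of_le _ ⟨⟨S, hS, rfl⟩, hSK⟩ le_rfl

lemma maxPolytopeVolume_le_iff {v : ENNReal} :
    maxPolytopeVolume N K ≤ v ↔ ∀ S : Finset E, S.card ≤ N → convexHull ℝ (S : Set E) ⊆ K →
      volume (convexHull ℝ (S : Set E)) ≤ v := by
  refine iSup₂_le_iff.trans ⟨fun h S hS hSK => h _ ⟨⟨S, hS, rfl⟩, hSK⟩, ?_⟩
  rintro h _ ⟨⟨S, hS, rfl⟩, hSK⟩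
  exact h S hS hSK

lemma maxPolytopeVolume_le_volume : maxPolytopeVolume N K ≤ volume K :=
  iSup₂_le fun _ hP => measure_mono hP.2

lemma maxPolytopeVolume_mono (h : K ⊆ L) : maxPolytopeVolume N K ≤ maxPolytopeVolume N L :=
  iSup₂_le fun P hP => le_iSup₂_of_le P ⟨hP.1, hP.2.trans h⟩ le_rfl

end Module

variable {E : Type*} [NormedAddCommGroup E] [NormedSpace ℝ E] [MeasureSpace E] [BorelSpace E]

lemma sInf_volume_sdiff_inscribedPolytopes (N : ℕ) {K : Set E} (hK : volume K ≠ ⊤) :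
    sInf ((fun P => volume (K \ P)) '' inscribedPolytopes N K) =
      volume K - maxPolytopeVolume N K := by
  have : Nonempty (inscribedPolytopes N K) := ⟨⟨∅, empty_mem_inscribedPolytopes N K⟩⟩
  rw [maxPolytopeVolume, iSup_subtype', ENNReal.sub_iSup hK, sInf_image']
  refine iInf_congr fun ⟨P, ⟨S, _, hPS⟩, hPK⟩ => ?_
  have hP : IsCompact P := hPS ▸ S.finite_toSet.isCompact_convexHull ℝ
  exact measure_sdiff hPK hP.measurableSet.nullMeasurableSet (measure_ne_top_of_subset hPK hK)

lemma ofReal_pow_mul_maxPolytopeVolume_le [FiniteDimensional ℝ E]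
    [(volume : Measure E).IsAddHaarMeasure] (N : ℕ) (K : Set E) {c : ℝ} (hc : 0 ≤ c) :
    ENNReal.ofReal (c ^ Module.finrank ℝ E) * maxPolytopeVolume N K ≤
      maxPolytopeVolume N (c • K) := by
  classical
  simp only [maxPolytopeVolume, ENNReal.mul_iSup]
  refine iSup₂_le ?_
  rintro _ ⟨⟨S, hS, rfl⟩, hSK⟩
  have himage : c • convexHull ℝ (S : Set E) =
      convexHull ℝ ((S.image (c • ·) : Finset E) : Set E) := by
    rw [Finset.coe_image, image_smul, convexHull_smul]
  calc ENNReal.ofReal (c ^ Module.finrank ℝ E) * volume (convexHull ℝ (S : Set E))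
      = volume (convexHull ℝ ((S.image (c • ·) : Finset E) : Set E)) := by
        rw [← himage, Measure.addHaar_smul, abs_of_nonneg (pow_nonneg hc _)]
    _ ≤ maxPolytopeVolume N (c • K) :=
        volume_convexHull_le_maxPolytopeVolume (Finset.card_image_le.trans hS)
          (himage ▸ smul_set_mono hSK)

end Polytopes

section Interval

open scoped Pointwise

lemma volume_sub_of_convex {I J : Set ℝ} (hI : IsCompact I) (hIconv : Convex ℝ I)
    (hIne : I.Nonempty) (hJ : IsCompact J) (hJconv : Convex ℝ J) (hJne : J.Nonempty) :
    volume (I - J) = volume I + volume J := by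
  obtain ⟨a, b, hab, rfl⟩ : ∃ a b, a ≤ b ∧ I = Icc a b := by
    have h := eq_Icc_of_connected_compact ⟨hIne, hIconv.isPreconnected⟩ hI
    exact ⟨_, _, nonempty_Icc.1 (h ▸ hIne), h⟩
  obtain ⟨c, d, hcd, rfl⟩ : ∃ a b, a ≤ b ∧ J = Icc a b := by
    have h := eq_Icc_of_connected_compact ⟨hJne, hJconv.isPreconnected⟩ hJ
    exact ⟨_, _, nonempty_Icc.1 (h ▸ hJne), h⟩
  rw [sub_eq_add_neg, neg_Icc, Icc_add_Icc hab (neg_le_neg hcd), Real.volume_Icc, Real.volume_Icc,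
    Real.volume_Icc, ← ENNReal.ofReal_add (sub_nonneg.2 hab) (sub_nonneg.2 hcd)]
  congr 1
  ring

lemma subset_or_subset_of_convex_of_neg_eq {I J : Set ℝ} (hI : Convex ℝ I) (hIneg : -I = I)
    (hJ : Convex ℝ J) (hJneg : -J = J) : I ⊆ J ∨ J ⊆ I := by
  have abs_mem : ∀ {S : Set ℝ}, -S = S → ∀ {t}, t ∈ S → |t| ∈ S ∧ -|t| ∈ S := by
    intro S hS t ht
    have hnt : -t ∈ S := by rwa [← Set.mem_neg, hS]
    rcases abs_choice t with h | h <;> simp [h, ht, hnt]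
  by_contra! h
  obtain ⟨⟨s, hsI, hsJ⟩, ⟨t, htJ, htI⟩⟩ := And.imp not_subset.1 not_subset.1 h
  rcases le_total |s| |t| with hst | hst
  · exact hsJ (hJ.ordConnected.out (abs_mem hJneg htJ).2 (abs_mem hJneg htJ).1 (abs_le.1 hst))
  · exact htI (hI.ordConnected.out (abs_mem hIneg hsI).2 (abs_mem hIneg hsI).1 (abs_le.1 hst))

lemma volume_inter_eq_min_of_convex_of_neg_eq {I J : Set ℝ} (hI : Convex ℝ I) (hIneg : -I = I)
    (hJ : Convex ℝ J) (hJneg : -J = J) : volume (I ∩ J) = min (volume I) (volume J) := by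
  rcases subset_or_subset_of_convex_of_neg_eq hI hIneg hJ hJneg with h | h
  · rw [inter_eq_left.2 h, min_eq_left (measure_mono h)]
  · rw [inter_eq_right.2 h, min_eq_right (measure_mono h)]

end Interval

section Translation

variable {G : Type*} [AddGroup G] [MeasurableSpace G] [MeasurableAdd₂ G] {μ : Measure G}
  {A B : Set G}

lemma measure_inter_add_measure_translate_le_min [μ.IsAddRightInvariant] (hA : MeasurableSet A)
    (hB : MeasurableSet B) (g : G) :
    μ (A ∩ B) + μ ((A \ B) ∩ (· + g) ⁻¹' (B \ A)) ≤ min (μ A) (μ B) := by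
  refine le_min ?_ ?_
  · grw [← measure_inter_add_sdiff A hB, inter_subset_left (s := A \ B)]
  · grw [← measure_inter_add_sdiff B hA, inter_comm B A, inter_subset_right (s := A \ B),
      measure_preimage_add_right]

lemma lintegral_measure_inter_preimage_add_right [SFinite μ] [μ.IsAddLeftInvariant]
    (hA : MeasurableSet A) (hB : MeasurableSet B) :
    ∫⁻ g, μ (A ∩ (· + g) ⁻¹' B) ∂μ = μ A * μ B := by
  have hAB : MeasurableSet {p : G × G | p.1 ∈ A ∧ p.1 + p.2 ∈ B} :=
    (hA.preimage measurable_fst).inter (hB.preimage measurable_add)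
  calc ∫⁻ g, μ (A ∩ (· + g) ⁻¹' B) ∂μ
      = ∫⁻ x, μ {g | x ∈ A ∧ x + g ∈ B} ∂μ :=
        (Measure.prod_apply_symm hAB).symm.trans (Measure.prod_apply hAB)
    _ = ∫⁻ x, A.indicator (fun _ => μ B) x ∂μ := by
        refine lintegral_congr fun x => ?_
        by_cases hx : x ∈ A
        · simp only [hx, true_and, indicator_of_mem]
          exact measure_preimage_add μ x B
        · simp [hx]
    _ = μ A * μ B := by rw [lintegral_indicator_const hA, mul_comm]

end Translation

section NormedSpace

variable {E : Type*} [NormedAddCommGroup E] [NormedSpace ℝ E] [FiniteDimensional ℝ E]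
  [MeasurableSpace E] [BorelSpace E] (μ : Measure E) [μ.IsAddHaarMeasure]

lemma exists_div_le_measure_inter_preimage_add_right {A B : Set E} (hA : MeasurableSet A)
    (hB : MeasurableSet B) {R : ℝ} (hR : 0 < R) (hAR : A ⊆ closedBall 0 R)
    (hBR : B ⊆ closedBall 0 R) :
    ∃ w, μ A * μ B / μ (closedBall 0 (2 * R)) ≤ μ (A ∩ (· + w) ⁻¹' B) := by
  have hsupp : Function.support (fun w => μ (A ∩ (· + w) ⁻¹' B)) ⊆ closedBall 0 (2 * R) := by
    intro w hw
    obtain ⟨x, hxA, hxB⟩ := nonempty_of_measure_ne_zero hw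
    have hx := mem_closedBall_zero_iff.1 (hAR hxA)
    have hxw := mem_closedBall_zero_iff.1 (hBR hxB)
    rw [mem_closedBall_zero_iff]
    calc ‖w‖ = ‖x + w - x‖ := by rw [add_sub_cancel_left]
      _ ≤ ‖x + w‖ + ‖x‖ := norm_sub_le _ _
      _ ≤ 2 * R := by linarith
  have hint : ∫⁻ w in closedBall 0 (2 * R), μ (A ∩ (· + w) ⁻¹' B) ∂μ = μ A * μ B := by
    rw [setLIntegral_eq_of_support_subset hsupp, lintegral_measure_inter_preimage_add_right hA hB]
  have hfin : ∀ {S : Set E}, S ⊆ closedBall 0 R → μ S ≠ ⊤ := fun h =>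
    measure_ne_top_of_subset h measure_closedBall_lt_top.ne
  obtain ⟨w, -, hw⟩ := exists_setLAverage_le (f := fun w => μ (A ∩ (· + w) ⁻¹' B))
    (measure_closedBall_pos μ 0 (by positivity : 0 < 2 * R)).ne'
    measurableSet_closedBall.nullMeasurableSet
    (hint ▸ ENNReal.mul_ne_top (hfin hAR) (hfin hBR))
  exact ⟨w, by rwa [setLAverage_eq, hint] at hw⟩

-- Of two points symmetric about `x`, at most one lies in `L`.
lemma measure_closedBall_le_two_mul_measure_sdiff {L : Set E} (hL : Convex ℝ L)
    (hLm : MeasurableSet L) {x : E} (hx : x ∉ L) (ρ : ℝ) :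
    μ (closedBall x ρ) ≤ 2 * μ (closedBall x ρ \ L) := by
  have hsymm : closedBall x ρ ∩ L ⊆ (x + x - ·) ⁻¹' (closedBall x ρ \ L) := by
    rintro z ⟨hz, hzL⟩
    refine ⟨?_, fun hzL' => hx ?_⟩
    · rw [mem_closedBall, dist_eq_norm] at hz ⊢
      rwa [sub_right_comm, add_sub_cancel_right, norm_sub_rev]
    · have hmid : midpoint ℝ z (x + x - z) = x := by
        rw [midpoint_eq_smul_add, add_sub_cancel, ← two_smul ℝ x, invOf_eq_inv,
          inv_smul_smul₀ two_ne_zero]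
      exact hmid ▸ hL.midpoint_mem hzL hzL'
  calc μ (closedBall x ρ) = μ (closedBall x ρ ∩ L) + μ (closedBall x ρ \ L) :=
        (measure_inter_add_sdiff _ hLm).symm
    _ ≤ μ (closedBall x ρ \ L) + μ (closedBall x ρ \ L) := by
        grw [hsymm, (Measure.measurePreserving_sub_left μ (x + x)).measure_preimage
          (measurableSet_closedBall.diff hLm).nullMeasurableSet]
    _ = 2 * μ (closedBall x ρ \ L) := (two_mul _).symm

lemma closedBall_subset_of_two_mul_measure_sdiff_lt {L : Set E} (hL : Convex ℝ L)
    (hLm : MeasurableSet L) {r ρ : ℝ}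
    (h : 2 * μ (closedBall 0 r \ L) < μ (closedBall (0 : E) ρ)) :
    closedBall 0 (r - ρ) ⊆ L := by
  intro x hx
  by_contra hxL
  have hsub : closedBall x ρ ⊆ closedBall 0 r :=
    closedBall_subset_closedBall' (by linarith [mem_closedBall.1 hx])
  refine h.not_ge ?_
  calc μ (closedBall 0 ρ) = μ (closedBall x ρ) := (Measure.addHaar_closedBall_center μ x ρ).symm
    _ ≤ 2 * μ (closedBall x ρ \ L) := measure_closedBall_le_two_mul_measure_sdiff μ hL hLm hxL ρ
    _ ≤ 2 * μ (closedBall 0 r \ L) := by grw [hsub]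

end NormedSpace

section Line

open scoped Pointwise

variable {E : Type*} [NormedAddCommGroup E] [InnerProductSpace ℝ E]

/-- The coordinates `(t, y) ↦ t u + y` on `E` splitting off the line spanned by `u`. -/
def lineEquiv {u : E} (hu : u ≠ 0) : (ℝ × (ℝ ∙ u)ᗮ) ≃L[ℝ] E :=
  ((ContinuousLinearEquiv.toSpanNonzeroSingleton ℝ u hu).prodCongr (.refl ℝ _)).trans
    (Submodule.prodEquivOfIsTopCompl _ _ (ℝ ∙ u).isTopCompl_orthogonal)

lemma lineEquiv_apply {u : E} (hu : u ≠ 0) (p : ℝ × (ℝ ∙ u)ᗮ) :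
    lineEquiv hu p = p.1 • u + p.2 := by
  simp [lineEquiv]

/-- The trace of `S` on the line through `y` in direction `u`, as a set of parameters. -/
def lineFiber (u y : E) (S : Set E) : Set ℝ := (fun t : ℝ => t • u + y) ⁻¹' S

lemma convex_lineFiber {S : Set E} (hS : Convex ℝ S) (u y : E) : Convex ℝ (lineFiber u y S) :=
  (hS.translate_preimage_left y).linear_preimage (LinearMap.toSpanSingleton ℝ E u)

lemma isCompact_lineFiber {S : Set E} (hS : IsCompact S) {u : E} (hu : u ≠ 0) (y : E) :
    IsCompact (lineFiber u y S) :=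
  ((Homeomorph.addRight y).isClosedEmbedding.comp
    (isClosedEmbedding_smul_left hu)).isCompact_preimage hS

lemma measurableSet_lineFiber [MeasurableSpace E] [BorelSpace E] {S : Set E}
    (hS : MeasurableSet S) (u y : E) : MeasurableSet (lineFiber u y S) :=
  hS.preimage (by fun_prop : Continuous fun t : ℝ => t • u + y).measurable

lemma reflection_smul_add (u : E) (t : ℝ) (y : (ℝ ∙ u)ᗮ) :
    (ℝ ∙ u)ᗮ.reflection (t • u + y) = -t • u + y := by
  rw [map_add, map_smul, Submodule.reflection_orthogonalComplement_singleton_eq_neg,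
    Submodule.reflection_mem_subspace_eq_self y.2, smul_neg, neg_smul]

lemma neg_lineFiber {u : E} {S : Set E} (hS : (ℝ ∙ u)ᗮ.reflection ⁻¹' S = S) (y : (ℝ ∙ u)ᗮ) :
    -lineFiber u y S = lineFiber u y S := by
  ext t
  rw [Set.mem_neg]
  change -t • u + (y : E) ∈ S ↔ t • u + (y : E) ∈ S
  rw [← reflection_smul_add, ← mem_preimage, hS]

variable [FiniteDimensional ℝ E] [MeasurableSpace E] [BorelSpace E]

lemma measurable_volume_lineFiber {u : E} (hu : u ≠ 0) {S : Set E} (hS : MeasurableSet S) :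
    Measurable fun y : (ℝ ∙ u)ᗮ => volume (lineFiber u (y : E) S) := by
  have h := measurable_measure_prodMk_right (μ := (volume : Measure ℝ))
    (hS.preimage (lineEquiv hu).continuous.measurable)
  simpa only [preimage_preimage, lineEquiv_apply, lineFiber] using h

-- `ν` is a multiple of Lebesgue measure, with a factor accounting for `‖u‖ ≠ 1`.
lemma exists_volume_eq_lintegral_lineFiber {u : E} (hu : u ≠ 0) :
    ∃ ν : Measure (ℝ ∙ u)ᗮ, ∀ S : Set E, MeasurableSet S →
      volume S = ∫⁻ y : (ℝ ∙ u)ᗮ, volume (lineFiber u (y : E) S) ∂ν := by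
  let μ : Measure (ℝ × (ℝ ∙ u)ᗮ) := volume.prod volume
  have : (μ.map (lineEquiv hu)).IsAddHaarMeasure := (lineEquiv hu).isAddHaarMeasure_map μ
  have hmeas : Measurable (lineEquiv hu) := (lineEquiv hu).continuous.measurable
  let c := (volume : Measure E).addHaarScalarFactor (μ.map (lineEquiv hu))
  have hc : (volume : Measure E) = c • μ.map (lineEquiv hu) :=
    Measure.isAddLeftInvariant_eq_smul _ _
  refine ⟨c • volume, fun S hS => ?_⟩
  calc volume S = c • μ (lineEquiv hu ⁻¹' S) := by
        rw [← Measure.map_apply hmeas hS, ← Measure.smul_apply, ← hc]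
    _ = c • ∫⁻ y : (ℝ ∙ u)ᗮ, volume (lineFiber u (y : E) S) := by
        rw [Measure.prod_apply_symm (hmeas hS)]
        simp only [preimage_preimage, lineEquiv_apply]
        rfl
    _ = ∫⁻ y : (ℝ ∙ u)ᗮ, volume (lineFiber u (y : E) S) ∂(c • volume) :=
        (lintegral_smul_measure _ _).symm

end Line

section Steiner

open scoped Pointwise

variable {E : Type*} [NormedAddCommGroup E] [InnerProductSpace ℝ E]

/-- The mean of `A` and the mirror image of `B` in the hyperplane `uᗮ`, taken separately on each
line parallel to `u`: its trace on such a line is half the Minkowski difference of the traces of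
`A` and `B`. -/
def steinerMean (u : E) (A B : Set E) : Set E :=
  (fun p : E × E => midpoint ℝ p.1 ((ℝ ∙ u)ᗮ.reflection p.2)) '' {p ∈ A ×ˢ B | p.1 - p.2 ∈ ℝ ∙ u}

/-- The Steiner symmetral of a convex set `L` with respect to the hyperplane `uᗮ`. The vector `u`
is not normalized. -/
def steiner (u : E) (L : Set E) : Set E := steinerMean u L L

lemma convex_steinerMean (u : E) {A B : Set E} (hA : Convex ℝ A) (hB : Convex ℝ B) :
    Convex ℝ (steinerMean u A B) := by
  have hlin : IsLinearMap ℝ fun p : E × E => midpoint ℝ p.1 ((ℝ ∙ u)ᗮ.reflection p.2) := by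
    constructor
    · intro p q
      simp only [midpoint_eq_smul_add, Prod.fst_add, Prod.snd_add, map_add]
      module
    · intro c p
      simp only [midpoint_eq_smul_add, Prod.smul_fst, Prod.smul_snd, map_smul]
      module
  exact ((hA.prod hB).inter ((ℝ ∙ u).convex.linear_preimage
    (LinearMap.fst ℝ E E - LinearMap.snd ℝ E E))).is_linear_image hlin

lemma isCompact_steinerMean (u : E) {A B : Set E} (hA : IsCompact A) (hB : IsCompact B) :
    IsCompact (steinerMean u A B) := by
  have hclosed : IsClosed {p : E × E | p.1 - p.2 ∈ ℝ ∙ u} :=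
    (ℝ ∙ u).closed_of_finiteDimensional.preimage (continuous_fst.sub continuous_snd)
  refine ((hA.prod hB).inter_right hclosed).image ?_
  simp only [midpoint_eq_smul_add]
  fun_prop

lemma steiner_subset_of_convex {u : E} {B L : Set E} (hB : Convex ℝ B)
    (hBsymm : (ℝ ∙ u)ᗮ.reflection ⁻¹' B = B) (hL : L ⊆ B) : steiner u L ⊆ B := by
  rintro _ ⟨⟨a, b⟩, ⟨⟨ha, hb⟩, -⟩, rfl⟩
  refine hB.midpoint_mem (hL ha) ?_
  rw [← hBsymm, mem_preimage, Submodule.reflection_reflection]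
  exact hL hb

lemma reflection_preimage_closedBall_zero (u : E) (r : ℝ) :
    (ℝ ∙ u)ᗮ.reflection ⁻¹' closedBall 0 r = closedBall 0 r := by
  rw [LinearIsometryEquiv.preimage_closedBall, map_zero]

lemma lineFiber_steinerMean {u : E} (hu : u ≠ 0) (A B : Set E) (y : (ℝ ∙ u)ᗮ) :
    lineFiber u y (steinerMean u A B) =
      (2⁻¹ : ℝ) • (lineFiber u (y : E) A - lineFiber u (y : E) B) := by
  have hmid : ∀ (p q : ℝ) (z : (ℝ ∙ u)ᗮ),
      midpoint ℝ (p • u + z : E) ((ℝ ∙ u)ᗮ.reflection (q • u + z)) =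
        ((2⁻¹ : ℝ) * (p - q)) • u + z := by
    intro p q z
    rw [reflection_smul_add, midpoint_eq_smul_add, invOf_eq_inv]
    module
  ext t
  constructor
  · rintro ⟨⟨a, b⟩, ⟨⟨ha, hb⟩, hab⟩, hmidt⟩
    obtain ⟨⟨q, z⟩, rfl⟩ := (lineEquiv hu).surjective b
    obtain ⟨k, hk : k • u = a - lineEquiv hu (q, z)⟩ := Submodule.mem_span_singleton.1 hab
    obtain rfl : a = (k + q) • u + z := by
      rw [sub_eq_iff_eq_add.1 hk.symm, lineEquiv_apply, add_smul, add_assoc]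
    simp only [lineEquiv_apply] at hb hmidt
    rw [hmid] at hmidt
    have hcoord : ((2⁻¹ : ℝ) * (k + q - q), z) = (t, y) :=
      (lineEquiv hu).injective (by simpa only [lineEquiv_apply] using hmidt)
    obtain ⟨rfl, rfl⟩ := Prod.mk.inj hcoord
    exact smul_mem_smul_set (sub_mem_sub ha hb)
  · rintro ⟨_, ⟨p, hp, q, hq, rfl⟩, rfl⟩
    refine ⟨(p • u + y, q • u + y), ⟨⟨hp, hq⟩, ?_⟩, hmid p q y⟩
    rw [add_sub_add_right_eq_sub, ← sub_smul]
    exact Submodule.smul_mem _ _ (Submodule.mem_span_singleton_self u)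

lemma volume_lineFiber_steinerMean {u : E} (hu : u ≠ 0) {A B : Set E} (hA : IsCompact A)
    (hAconv : Convex ℝ A) (hB : IsCompact B) (hBconv : Convex ℝ B) (y : (ℝ ∙ u)ᗮ)
    (hAne : (lineFiber u (y : E) A).Nonempty) (hBne : (lineFiber u (y : E) B).Nonempty) :
    2 * volume (lineFiber u (y : E) (steinerMean u A B)) =
      volume (lineFiber u (y : E) A) + volume (lineFiber u (y : E) B) := by
  rw [lineFiber_steinerMean hu, Measure.addHaar_smul,
    volume_sub_of_convex (isCompact_lineFiber hA hu _) (convex_lineFiber hAconv _ _) hAne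
      (isCompact_lineFiber hB hu _) (convex_lineFiber hBconv _ _) hBne, ← mul_assoc]
  have : (2 : ENNReal) * ENNReal.ofReal |2⁻¹ ^ Module.finrank ℝ ℝ| = 1 := by
    rw [Module.finrank_self, pow_one, abs_of_pos (by norm_num), ENNReal.ofReal_inv_of_pos two_pos,
      ENNReal.ofReal_ofNat, ENNReal.mul_inv_cancel two_ne_zero ENNReal.ofNat_ne_top]
  rw [this, one_mul]

lemma volume_lineFiber_steiner {u : E} (hu : u ≠ 0) {L : Set E} (hL : IsCompact L)
    (hLconv : Convex ℝ L) (y : (ℝ ∙ u)ᗮ) :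
    volume (lineFiber u (y : E) (steiner u L)) = volume (lineFiber u (y : E) L) := by
  rcases (lineFiber u (y : E) L).eq_empty_or_nonempty with hempty | hne
  · rw [steiner, lineFiber_steinerMean hu, hempty, empty_sub, smul_set_empty]
  · have h := volume_lineFiber_steinerMean hu hL hLconv hL hLconv y hne hne
    rw [← two_mul] at h
    exact (ENNReal.mul_right_inj two_ne_zero ENNReal.ofNat_ne_top).1 h

lemma neg_lineFiber_steiner {u : E} (hu : u ≠ 0) (L : Set E) (y : (ℝ ∙ u)ᗮ) :
    -lineFiber u (y : E) (steiner u L) = lineFiber u (y : E) (steiner u L) := by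
  rw [steiner, lineFiber_steinerMean hu, ← smul_set_neg, neg_sub]

variable [FiniteDimensional ℝ E] [MeasurableSpace E] [BorelSpace E]

lemma two_mul_volume_steinerMean_le {u : E} (hu : u ≠ 0) {A B : Set E} (hA : IsCompact A)
    (hAconv : Convex ℝ A) (hB : IsCompact B) (hBconv : Convex ℝ B) :
    2 * volume (steinerMean u A B) ≤ volume A + volume B := by
  have hM := (isCompact_steinerMean u hA hB).measurableSet
  obtain ⟨ν, hν⟩ := exists_volume_eq_lintegral_lineFiber hu
  rw [hν _ hM, hν A hA.measurableSet, hν B hB.measurableSet,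
    ← lintegral_const_mul _ (measurable_volume_lineFiber hu hM),
    ← lintegral_add_left (measurable_volume_lineFiber hu hA.measurableSet)]
  refine lintegral_mono fun y => ?_
  rcases (lineFiber u (y : E) A).eq_empty_or_nonempty with hAe | hAne
  · simp [lineFiber_steinerMean hu, hAe]
  rcases (lineFiber u (y : E) B).eq_empty_or_nonempty with hBe | hBne
  · simp [lineFiber_steinerMean hu, hBe]
  exact (volume_lineFiber_steinerMean hu hA hAconv hB hBconv y hAne hBne).le

lemma volume_steiner {u : E} (hu : u ≠ 0) {L : Set E} (hL : IsCompact L) (hLconv : Convex ℝ L) :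
    volume (steiner u L) = volume L := by
  obtain ⟨ν, hν⟩ := exists_volume_eq_lintegral_lineFiber hu
  rw [hν (steiner u L) (isCompact_steinerMean u hL hL).measurableSet, hν L hL.measurableSet]
  exact lintegral_congr fun y => volume_lineFiber_steiner hu hL hLconv y

-- On each line the symmetral and `B` leave concentric intervals, whose overlap is the shorter one.
lemma volume_inter_add_le_volume_steiner_inter {u : E} (hu : u ≠ 0) {L B : Set E}
    (hL : IsCompact L) (hLconv : Convex ℝ L) (hB : MeasurableSet B) (hBconv : Convex ℝ B)
    (hBsymm : (ℝ ∙ u)ᗮ.reflection ⁻¹' B = B) :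
    volume (L ∩ B) + volume ((L \ B) ∩ (· + u) ⁻¹' (B \ L)) ≤ volume (steiner u L ∩ B) := by
  have hLm := hL.measurableSet
  have hSm : MeasurableSet (steiner u L) := (isCompact_steinerMean u hL hL).measurableSet
  have hAm : MeasurableSet ((L \ B) ∩ (· + u) ⁻¹' (B \ L)) :=
    (hLm.diff hB).inter ((hB.diff hLm).preimage (measurable_add_const u))
  obtain ⟨ν, hν⟩ := exists_volume_eq_lintegral_lineFiber hu
  rw [hν _ (hLm.inter hB), hν _ hAm, hν _ (hSm.inter hB),
    ← lintegral_add_left (measurable_volume_lineFiber hu (hLm.inter hB))]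
  refine lintegral_mono fun y => ?_
  set F := lineFiber u (y : E) L
  set G := lineFiber u (y : E) B
  have htranslate : lineFiber u (y : E) ((L \ B) ∩ (· + u) ⁻¹' (B \ L)) =
      (F \ G) ∩ (· + 1) ⁻¹' (G \ F) := by
    have hstep : ∀ t : ℝ, t • u + (y : E) + u = (t + 1) • u + y := fun t => by module
    simp only [F, G, lineFiber, preimage_inter, preimage_sdiff, preimage_preimage, hstep]
  calc volume (F ∩ G) + volume (lineFiber u (y : E) ((L \ B) ∩ (· + u) ⁻¹' (B \ L)))
      ≤ min (volume F) (volume G) := by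
        rw [htranslate]
        exact measure_inter_add_measure_translate_le_min (measurableSet_lineFiber hLm _ _)
          (measurableSet_lineFiber hB _ _) 1
    _ = min (volume (lineFiber u (y : E) (steiner u L))) (volume G) := by
        rw [volume_lineFiber_steiner hu hL hLconv]
    _ = volume (lineFiber u (y : E) (steiner u L) ∩ G) :=
        (volume_inter_eq_min_of_convex_of_neg_eq
          (convex_lineFiber (convex_steinerMean u hLconv hLconv) _ _)
          (neg_lineFiber_steiner hu L y) (convex_lineFiber hBconv _ _)
          (neg_lineFiber hBsymm y)).symm

-- The vertices `x = midpoint (a x) (σ (b x))` of a polytope in the symmetral, with `σ` the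
-- reflection, give two polytopes in `L`, with vertices `a x` and `b x`, whose mean contains it.
lemma maxPolytopeVolume_steiner_le {u : E} (hu : u ≠ 0) {L : Set E} (hL : Convex ℝ L) (N : ℕ) :
    maxPolytopeVolume N (steiner u L) ≤ maxPolytopeVolume N L := by
  classical
  refine maxPolytopeVolume_le_iff.2 fun S hS hSL => ?_
  have hvertex : ∀ x ∈ S, ∃ a b, a ∈ L ∧ b ∈ L ∧ a - b ∈ ℝ ∙ u ∧
      midpoint ℝ a ((ℝ ∙ u)ᗮ.reflection b) = x := by
    intro x hx
    obtain ⟨⟨a, b⟩, ⟨⟨ha, hb⟩, hab⟩, hx⟩ := hSL (subset_convexHull ℝ _ hx)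
    exact ⟨a, b, ha, hb, hab, hx⟩
  choose! a b ha hb hab hmid using hvertex
  let polytope (f : E → E) : Set E := convexHull ℝ ((S.image f : Finset E) : Set E)
  have hcompact : ∀ f, IsCompact (polytope f) := fun f =>
    (S.image f).finite_toSet.isCompact_convexHull ℝ
  have hconv : ∀ f, Convex ℝ (polytope f) := fun f => convex_convexHull ℝ _
  have hmem : ∀ f, ∀ x ∈ S, f x ∈ polytope f := fun f x hx =>
    subset_convexHull ℝ _ (Finset.mem_coe.2 (Finset.mem_image_of_mem f hx))
  have hvol : ∀ f, (∀ x ∈ S, f x ∈ L) → volume (polytope f) ≤ maxPolytopeVolume N L := by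
    refine fun f hf => volume_convexHull_le_maxPolytopeVolume (Finset.card_image_le.trans hS)
      (convexHull_min ?_ hL)
    rw [Finset.coe_image]
    exact image_subset_iff.2 hf
  have hsub : convexHull ℝ (S : Set E) ⊆ steinerMean u (polytope a) (polytope b) :=
    convexHull_min (fun x hx => ⟨(a x, b x), ⟨⟨hmem a x hx, hmem b x hx⟩, hab x hx⟩, hmid x hx⟩)
      (convex_steinerMean u (hconv a) (hconv b))
  refine (ENNReal.mul_le_mul_iff_right two_ne_zero ENNReal.ofNat_ne_top).1 ?_
  calc 2 * volume (convexHull ℝ (S : Set E))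
      ≤ 2 * volume (steinerMean u (polytope a) (polytope b)) := by grw [hsub]
    _ ≤ volume (polytope a) + volume (polytope b) :=
        two_mul_volume_steinerMean_le hu (hcompact a) (hconv a) (hcompact b) (hconv b)
    _ ≤ maxPolytopeVolume N L + maxPolytopeVolume N L := add_le_add (hvol a ha) (hvol b hb)
    _ = 2 * maxPolytopeVolume N L := (two_mul _).symm

end Steiner

section Iteration

open scoped Pointwise

variable {E : Type*} [NormedAddCommGroup E] [InnerProductSpace ℝ E] {K L : Set E}

/-- `IsIteratedSteiner K L` says that `L` arises from `K` by finitely many successive Steiner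
symmetrizations. -/
inductive IsIteratedSteiner (K : Set E) : Set E → Prop
  | refl : IsIteratedSteiner K K
  | steiner {L : Set E} {u : E} (hu : u ≠ 0) (h : IsIteratedSteiner K L) :
      IsIteratedSteiner K (steiner u L)

namespace IsIteratedSteiner

lemma convex (h : IsIteratedSteiner K L) (hK : Convex ℝ K) : Convex ℝ L := by
  induction h with
  | refl => exact hK
  | steiner _ _ ih => exact convex_steinerMean _ ih ih

lemma isCompact (h : IsIteratedSteiner K L) (hK : IsCompact K) : IsCompact L := by
  induction h with
  | refl => exact hK
  | steiner _ _ ih => exact isCompact_steinerMean _ ih ih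

lemma subset_closedBall (h : IsIteratedSteiner K L) {R : ℝ} (hK : K ⊆ closedBall 0 R) :
    L ⊆ closedBall 0 R := by
  induction h with
  | refl => exact hK
  | steiner _ _ ih =>
    exact steiner_subset_of_convex (convex_closedBall 0 R)
      (reflection_preimage_closedBall_zero _ R) ih

variable [FiniteDimensional ℝ E] [MeasurableSpace E] [BorelSpace E]

lemma volume_eq (h : IsIteratedSteiner K L) (hKc : IsCompact K) (hKconv : Convex ℝ K) :
    volume L = volume K := by
  induction h with
  | refl => rfl
  | steiner hu h ih => rw [volume_steiner hu (h.isCompact hKc) (h.convex hKconv), ih]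

lemma maxPolytopeVolume_le (h : IsIteratedSteiner K L) (hK : Convex ℝ K) (N : ℕ) :
    maxPolytopeVolume N L ≤ maxPolytopeVolume N K := by
  induction h with
  | refl => rfl
  | steiner hu h ih => exact (maxPolytopeVolume_steiner_le hu (h.convex hK) N).trans ih

end IsIteratedSteiner

variable [FiniteDimensional ℝ E] [MeasurableSpace E] [BorelSpace E]

lemma exists_steiner_gain (hL : IsCompact L) (hLconv : Convex ℝ L) {r R : ℝ} (hR : 0 < R)
    (hrR : r ≤ R) (hLR : L ⊆ closedBall 0 R) (hvol : volume (closedBall (0 : E) r) ≤ volume L)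
    (hmiss : volume (closedBall 0 r \ L) ≠ 0) :
    ∃ u : E, u ≠ 0 ∧
      volume (L ∩ closedBall 0 r) +
          volume (closedBall 0 r \ L) * volume (closedBall 0 r \ L) /
            volume (closedBall (0 : E) (2 * R)) ≤
        volume (steiner u L ∩ closedBall 0 r) := by
  set B : Set E := closedBall 0 r
  have hLm := hL.measurableSet
  have hBm : MeasurableSet B := measurableSet_closedBall
  have hexcess : volume (B \ L) ≤ volume (L \ B) := by
    rw [← measure_inter_add_sdiff B hLm, ← measure_inter_add_sdiff L hBm, inter_comm L] at hvol
    exact ENNReal.le_of_add_le_add_left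
      (measure_ne_top_of_subset inter_subset_left measure_closedBall_lt_top.ne) hvol
  obtain ⟨u, hu⟩ := exists_div_le_measure_inter_preimage_add_right volume (hLm.diff hBm)
    (hBm.diff hLm) hR (sdiff_subset.trans hLR)
    (sdiff_subset.trans (closedBall_subset_closedBall hrR))
  have hgain : volume (B \ L) * volume (B \ L) / volume (closedBall (0 : E) (2 * R)) ≤
      volume ((L \ B) ∩ (· + u) ⁻¹' (B \ L)) := by
    grw [← hu, ← hexcess]
  have hpos : volume ((L \ B) ∩ (· + u) ⁻¹' (B \ L)) ≠ 0 :=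
    ((ENNReal.div_pos (mul_ne_zero hmiss hmiss) measure_closedBall_lt_top.ne).trans_le hgain).ne'
  have hu0 : u ≠ 0 := by
    rintro rfl
    obtain ⟨x, hxL, hxB⟩ := nonempty_of_measure_ne_zero hpos
    exact hxL.2 (by simpa using hxB.1)
  refine ⟨u, hu0, ?_⟩
  grw [hgain]
  exact volume_inter_add_le_volume_steiner_inter hu0 hL hLconv hBm (convex_closedBall 0 r)
    (reflection_preimage_closedBall_zero u r)

lemma exists_isIteratedSteiner_volume_sdiff_lt (hKc : IsCompact K) (hKconv : Convex ℝ K) {r : ℝ}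
    (hvol : volume (closedBall (0 : E) r) ≤ volume K) {δ : ENNReal} (hδ : δ ≠ 0) :
    ∃ L, IsIteratedSteiner K L ∧ volume (closedBall 0 r \ L) < δ := by
  by_contra! hmiss
  set B : Set E := closedBall 0 r
  obtain ⟨R, hrR, hKR⟩ := hKc.isBounded.subset_closedBall_lt (max r 0) 0
  obtain ⟨hrR, hR⟩ := max_lt_iff.1 hrR
  set gain : ENNReal := δ * δ / volume (closedBall (0 : E) (2 * R))
  have hgain : gain ≠ 0 := (ENNReal.div_pos (mul_ne_zero hδ hδ) measure_closedBall_lt_top.ne).ne'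
  let overlap : ENNReal := ⨆ L : {L // IsIteratedSteiner K L}, volume (L.1 ∩ B)
  have hfin : overlap ≠ ⊤ := ne_top_of_le_ne_top measure_closedBall_lt_top.ne
    (iSup_le fun L => measure_mono inter_subset_right)
  have hstep : ∀ L : {L // IsIteratedSteiner K L}, volume (L.1 ∩ B) + gain ≤ overlap := by
    rintro ⟨L, hL⟩
    obtain ⟨u, hu, h⟩ := exists_steiner_gain (hL.isCompact hKc) (hL.convex hKconv) hR hrR.le
      (hL.subset_closedBall hKR) (hvol.trans (hL.volume_eq hKc hKconv).ge)
      ((pos_iff_ne_zero.2 hδ).trans_le (hmiss L hL)).ne'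
    calc volume (L ∩ B) + gain ≤ volume (steiner u L ∩ B) := by
          grw [← h, ← hmiss L hL]
      _ ≤ overlap := le_iSup_of_le ⟨_, hL.steiner hu⟩ le_rfl
  have : Nonempty {L // IsIteratedSteiner K L} := ⟨⟨K, .refl⟩⟩
  refine (ENNReal.lt_add_right hfin hgain).not_ge ?_
  rw [ENNReal.iSup_add]
  exact iSup_le hstep

lemma ofReal_pow_mul_maxPolytopeVolume_closedBall_le (hKc : IsCompact K) (hKconv : Convex ℝ K)
    {r : ℝ} (hpos : volume (closedBall (0 : E) r) ≠ 0)
    (hvol : volume (closedBall (0 : E) r) ≤ volume K) (N : ℕ) {c : ℝ} (hc : 0 ≤ c) (hc1 : c < 1) :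
    ENNReal.ofReal (c ^ Module.finrank ℝ E) * maxPolytopeVolume N (closedBall (0 : E) r) ≤
      maxPolytopeVolume N K := by
  have hr0 : 0 ≤ r := nonempty_closedBall.1 (nonempty_of_measure_ne_zero hpos)
  have hshell : volume (closedBall (0 : E) ((1 - c) * r)) ≠ 0 := by
    rw [Measure.addHaar_closedBall_mul_of_pos volume 0 (sub_pos.2 hc1)]
    exact mul_ne_zero (ENNReal.ofReal_pos.2 (pow_pos (sub_pos.2 hc1) _)).ne' hpos
  obtain ⟨L, hL, hmiss⟩ :=
    exists_isIteratedSteiner_volume_sdiff_lt hKc hKconv hvol (ENNReal.half_pos hshell).ne'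
  rw [ENNReal.lt_div_iff_mul_lt (.inl two_ne_zero) (.inl ENNReal.ofNat_ne_top), mul_comm] at hmiss
  have hball : c • closedBall (0 : E) r ⊆ L := by
    have h := closedBall_subset_of_two_mul_measure_sdiff_lt volume (hL.convex hKconv)
      (hL.isCompact hKc).measurableSet hmiss
    rwa [one_sub_mul, sub_sub_cancel, ← Real.norm_of_nonneg hc, ← smul_zero c,
      ← smul_closedBall _ _ hr0] at h
  calc ENNReal.ofReal (c ^ Module.finrank ℝ E) * maxPolytopeVolume N (closedBall (0 : E) r)
      ≤ maxPolytopeVolume N (c • closedBall (0 : E) r) :=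
        ofReal_pow_mul_maxPolytopeVolume_le N _ hc
    _ ≤ maxPolytopeVolume N L := maxPolytopeVolume_mono hball
    _ ≤ maxPolytopeVolume N K := hL.maxPolytopeVolume_le hKconv N

lemma maxPolytopeVolume_closedBall_le (hKc : IsCompact K) (hKconv : Convex ℝ K) {r : ℝ}
    (hvol : volume (closedBall (0 : E) r) ≤ volume K) (N : ℕ) :
    maxPolytopeVolume N (closedBall (0 : E) r) ≤ maxPolytopeVolume N K := by
  rcases eq_or_ne (volume (closedBall (0 : E) r)) 0 with hnull | hpos
  · exact maxPolytopeVolume_le_volume.trans (hnull.le.trans zero_le)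
  have hlim : Tendsto (fun c : ℝ => ENNReal.ofReal (c ^ Module.finrank ℝ E) *
      maxPolytopeVolume N (closedBall (0 : E) r)) (nhdsWithin 1 (Iio 1))
      (nhds (maxPolytopeVolume N (closedBall (0 : E) r))) := by
    have hpow : Continuous fun c : ℝ => ENNReal.ofReal (c ^ Module.finrank ℝ E) :=
      ENNReal.continuous_ofReal.comp (continuous_pow _)
    simpa using ENNReal.Tendsto.mul_const (b := maxPolytopeVolume N (closedBall (0 : E) r))
      ((hpow.tendsto 1).mono_left nhdsWithin_le_nhds) (.inl (by simp))
  refine le_of_tendsto hlim ?_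
  filter_upwards [Ico_mem_nhdsLT one_pos] with c hc
  exact ofReal_pow_mul_maxPolytopeVolume_closedBall_le hKc hKconv hpos hvol N hc.1 hc.2

end Iteration

theorem macbeath_inequality_general {E : Type*} [NormedAddCommGroup E] [InnerProductSpace ℝ E]
    [FiniteDimensional ℝ E] [MeasurableSpace E] [BorelSpace E] (N : ℕ) {K : Set E}
    (hKc : IsCompact K) (hKconv : Convex ℝ K) {r : ℝ}
    (hvol : volume (closedBall (0 : E) r) = volume K) :
    sInf ((fun P => volume (K \ P)) '' inscribedPolytopes N K) ≤
      sInf ((fun P => volume (closedBall (0 : E) r \ P)) ''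
        inscribedPolytopes N (closedBall (0 : E) r)) := by
  rw [sInf_volume_sdiff_inscribedPolytopes N hKc.measure_ne_top,
    sInf_volume_sdiff_inscribedPolytopes N measure_closedBall_lt_top.ne, hvol]
  exact tsub_le_tsub_left (maxPolytopeVolume_closedBall_le hKc hKconv hvol.le N) _

/-- **Macbeath's inequality.** For a convex body `K ⊂ ℝⁿ` and the centered closed
ball `K* = closedBall 0 r` of the same volume, the best approximation of `K` by inscribed
polytopes with at most `N` vertices is at least as good as that of `K*`. -/
theorem macbeath_inequality
    (n N : ℕ) (hn : 1 ≤ n) (hN : n + 2 ≤ N)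
    (K : Set (Eucl n)) (hKc : IsCompact K) (hKconv : Convex ℝ K)
    (hKint : (interior K).Nonempty)
    (r : ℝ) (hr : 0 ≤ r)
    (hvol : volume (closedBall (0 : Eucl n) r) = volume K) :
    sInf ((fun P => volume (K \ P)) '' PolyIn N K) ≤
      sInf ((fun P => volume (closedBall (0 : Eucl n) r \ P)) ''
        PolyIn N (closedBall (0 : Eucl n) r)) :=
  macbeath_inequality_general N hKc hKconv hvol
end
end
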